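/- arXiv:1712.06371 — 2 statements merged into one kernel-verified Lean document; each statement's English description precedes it below -/
import Mathlib

section
/- Under Assumptions (K) and (A), for every u₀ ∈ U⁰, every ũ₀ ∈ X_ℂ with ‖ũ₀‖ ≤ R·e^{−M/R}, every ε ∈ (0,1] and every t ∈ [0,1], the solution of the initial value problem u̇(t) = f_{t/ε}(u(t)), u(0) = u₀ + ũ₀ exists on [0,1] and remains in K_R for all t ∈ [0,1]. -/
open Set

/-- The set `K_ρ = {u + ũ : u ∈ closure K, ‖ũ‖ ≤ ρ}` inside the complexification `Xc` of `X`,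
where `ι : X →ₗᵢ[ℝ] Xc` is the canonical (isometric, ℝ-linear) embedding. -/
def Kset {X Xc : Type*} [NormedAddCommGroup X] [NormedSpace ℝ X]
    [NormedAddCommGroup Xc] [NormedSpace ℂ Xc]
    (ι : X →ₗᵢ[ℝ] Xc) (K : Set X) (ρ : ℝ) : Set Xc :=
  {z | ∃ u ∈ closure K, ∃ w : Xc, ‖w‖ ≤ ρ ∧ z = ι u + w}

/-! A small complex displacement of a real solution `v` solves `ẇ = F_t(v + w) - F_t(v)`, whose
right hand side vanishes at `w = 0`. Being holomorphic and bounded by `M` on balls of radius `2R`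
about `v`, the field `F_t` is `M/R`-Lipschitz on balls of radius `R` by Cauchy's estimate, so
Grönwall's inequality gives `‖w(t)‖ ≤ ‖w(0)‖ exp(Mt/R)`, and `w` does not leave the ball of radius
`R`. Global existence of `w` comes from truncating the field radially outside that ball; the a
priori bound then shows that the truncation is never active. -/

open Metric Filter Function
open scoped NNReal

section CauchyEstimate

variable {E F : Type*} [NormedAddCommGroup E] [NormedSpace ℂ E]
  [NormedAddCommGroup F] [NormedSpace ℂ F] {g : E → F} {c : E} {s : Set E} {R M : ℝ}

theorem norm_fderiv_le_div_of_norm_le_on_ball (hR : 0 < R) (hg : DifferentiableOn ℂ g (ball c R))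
    (hM : ∀ z ∈ ball c R, ‖g z‖ ≤ M) : ‖fderiv ℂ g c‖ ≤ M / R := by
  -- The odd part of `g` about `c` vanishes at the centre and has the same derivative there, so
  -- that the Schwarz lemma yields `M / R` instead of the `2 * M / R` obtained from `g - g c`.
  let odd : E → F := fun h ↦ (2⁻¹ : ℂ) • (g (c + h) - g (c - h))
  have hadd : MapsTo (fun h ↦ c + h) (ball 0 R) (ball c R) := fun h hh ↦ by simpa using hh
  have hsub : MapsTo (fun h ↦ c - h) (ball 0 R) (ball c R) := fun h hh ↦ by simpa using hh
  have hodd : DifferentiableOn ℂ odd (ball 0 R) :=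
    ((hg.comp (by fun_prop) hadd).sub (hg.comp (by fun_prop) hsub)).const_smul _
  have hodd_maps : MapsTo odd (ball 0 R) (closedBall (odd 0) M) := fun h hh ↦ by
    have := norm_sub_le (g (c + h)) (g (c - h))
    have := hM _ (hadd hh)
    have := hM _ (hsub hh)
    simp only [odd, add_zero, sub_zero, sub_self, smul_zero, mem_closedBall, dist_zero_right,
      norm_smul, norm_inv, Complex.norm_ofNat]
    linarith
  have hodd_deriv : HasFDerivAt odd (fderiv ℂ g c) 0 := by
    have hgc : HasFDerivAt g (fderiv ℂ g c) c :=
      (hg.differentiableAt (ball_mem_nhds c hR)).hasFDerivAt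
    have hplus : HasFDerivAt (fun h ↦ g (c + h)) (fderiv ℂ g c) 0 := by
      rw [hasFDerivAt_comp_add_left, add_zero]
      exact hgc
    have hminus : HasFDerivAt (fun h ↦ g (c - h)) (-fderiv ℂ g c) 0 := by
      have hinner : HasFDerivAt (fun h : E ↦ c - h) (-ContinuousLinearMap.id ℂ E) 0 :=
        (hasFDerivAt_id 0).const_sub c
      rw [← sub_zero c] at hgc
      exact (hgc.comp 0 hinner).congr_fderiv (by simp)
    refine ((hplus.sub hminus).const_smul (2⁻¹ : ℂ)).congr_fderiv ?_
    rw [sub_neg_eq_add, ← two_smul ℂ, smul_smul]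
    norm_num
  rw [← hodd_deriv.fderiv]
  exact Complex.norm_fderiv_le_div_of_mapsTo_ball hodd hodd_maps hR

theorem lipschitzOnWith_of_norm_le_on_thickening (hR : 0 < R) (hs : Convex ℝ s)
    (hg : DifferentiableOn ℂ g (thickening R s)) (hM : ∀ z ∈ thickening R s, ‖g z‖ ≤ M) :
    LipschitzOnWith (M / R).toNNReal g s := by
  have hball : ∀ z ∈ s, ball z R ⊆ thickening R s := fun z hz ↦ ball_subset_thickening hz R
  refine hs.lipschitzOnWith_of_nnnorm_fderiv_le (𝕜 := ℂ) (fun z hz ↦ ?_) fun z hz ↦ ?_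
  · exact hg.differentiableAt (mem_of_superset (ball_mem_nhds z hR) (hball z hz))
  · exact NNReal.le_toNNReal_of_coe_le <| norm_fderiv_le_div_of_norm_le_on_ball hR
      (hg.mono (hball z hz)) fun y hy ↦ hM y (hball z hz hy)

theorem continuousOn_uncurry_of_differentiableOn_of_norm_le {T : Type*} [TopologicalSpace T]
    {G : T → E → F} {S : Set T} {U : Set E} (hU : IsOpen U)
    (hcont : ∀ z ∈ U, ContinuousOn (fun t ↦ G t z) S)
    (hdiff : ∀ t ∈ S, DifferentiableOn ℂ (G t) U) (hM : ∀ t ∈ S, ∀ z ∈ U, ‖G t z‖ ≤ M) :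
    ContinuousOn (uncurry G) (S ×ˢ U) := by
  rintro ⟨t, z⟩ ⟨ht, hz⟩
  obtain ⟨r, hr, hrU⟩ : ∃ r > 0, thickening r (ball z r) ⊆ U := by
    obtain ⟨r, hr, hrU⟩ := Metric.isOpen_iff.1 hU z hz
    refine ⟨r / 2, half_pos hr, ?_⟩
    rwa [thickening_ball (half_pos hr) (half_pos hr), add_halves]
  have hlip : ∀ t ∈ S, LipschitzOnWith (M / r).toNNReal (G t) (ball z r) := fun t ht ↦
    lipschitzOnWith_of_norm_le_on_thickening hr (convex_ball z r) ((hdiff t ht).mono hrU)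
      fun y hy ↦ hM t ht y (hrU hy)
  have hlocal : ContinuousOn (uncurry G) (S ×ˢ ball z r) :=
    continuousOn_prod_of_continuousOn_lipschitzOnWith' _ _ hlip fun y hy ↦
      hcont y (hrU (self_subset_thickening hr _ hy))
  refine (hlocal (t, z) ⟨ht, mem_ball_self hr⟩).mono_of_mem_nhdsWithin ?_
  rw [nhdsWithin_prod_eq]
  exact prod_mem_prod self_mem_nhdsWithin (mem_nhdsWithin_of_mem_nhds (ball_mem_nhds z hr))

end CauchyEstimate

section RadialRetraction

variable {E : Type*} [NormedAddCommGroup E] [NormedSpace ℝ E] {R : ℝ}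

/-- The retraction of a normed space onto the closed ball of radius `R > 0` about the origin that
moves the points outside the ball along rays. It serves to truncate vector fields. -/
noncomputable def radialRetraction (R : ℝ) (x : E) : E :=
  (R / max R ‖x‖) • x

theorem radialRetraction_of_norm_le (hR : 0 < R) {x : E} (hx : ‖x‖ ≤ R) :
    radialRetraction R x = x := by
  rw [radialRetraction, max_eq_left hx, div_self hR.ne', one_smul]

theorem norm_radialRetraction_le (hR : 0 < R) (x : E) : ‖radialRetraction R x‖ ≤ R := by
  have hmax : 0 < max R ‖x‖ := lt_max_of_lt_left hR
  rw [radialRetraction, norm_smul, Real.norm_of_nonneg (by positivity), div_mul_eq_mul_div,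
    div_le_iff₀ hmax]
  exact mul_le_mul_of_nonneg_left (le_max_right _ _) hR.le

theorem norm_radialRetraction_le_norm (hR : 0 < R) (x : E) : ‖radialRetraction R x‖ ≤ ‖x‖ := by
  have hmax : 0 < max R ‖x‖ := lt_max_of_lt_left hR
  rw [radialRetraction, norm_smul, Real.norm_of_nonneg (by positivity)]
  exact mul_le_of_le_one_left (norm_nonneg x) ((div_le_one hmax).2 (le_max_left _ _))

theorem lipschitzWith_radialRetraction (hR : 0 < R) :
    LipschitzWith 2 (radialRetraction R : E → E) := by
  refine LipschitzWith.of_dist_le_mul fun x y ↦ ?_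
  set m := max R ‖x‖ with hm
  set n := max R ‖y‖ with hn
  have hm_pos : 0 < m := lt_max_of_lt_left hR
  have hn_pos : 0 < n := lt_max_of_lt_left hR
  have hmn : |m - n| ≤ ‖x - y‖ := calc
    |m - n| ≤ |‖x‖ - ‖y‖| := by
      simpa [hm, hn] using abs_max_sub_max_le_max R ‖x‖ R ‖y‖
    _ ≤ ‖x - y‖ := abs_norm_sub_norm_le x y
  have hRm : R / m ≤ 1 := (div_le_one hm_pos).2 (le_max_left _ _)
  have hyn : ‖y‖ / n ≤ 1 := (div_le_one hn_pos).2 (le_max_right _ _)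
  have hsplit : radialRetraction R x - radialRetraction R y =
      (R / m) • ((x - y) - ((m - n) / n) • y) := by
    have hcoeff : R / n = R / m + R / m * ((m - n) / n) := by field_simp; ring
    simp only [radialRetraction, ← hm, ← hn, hcoeff]
    module
  calc dist (radialRetraction R x) (radialRetraction R y)
      = R / m * ‖(x - y) - ((m - n) / n) • y‖ := by
        rw [dist_eq_norm, hsplit, norm_smul, Real.norm_of_nonneg (by positivity)]
    _ ≤ 1 * (‖x - y‖ + ‖((m - n) / n) • y‖) := by gcongr; exact norm_sub_le _ _
    _ = ‖x - y‖ + |m - n| * (‖y‖ / n) := by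
        rw [one_mul, norm_smul, Real.norm_eq_abs, abs_div, abs_of_pos hn_pos]
        ring
    _ ≤ ‖x - y‖ + ‖x - y‖ * 1 := by gcongr
    _ = (2 : ℝ≥0) * dist x y := by rw [dist_eq_norm, NNReal.coe_ofNat]; ring

end RadialRetraction

section InitialValueProblem

variable {E : Type*} [NormedAddCommGroup E] [NormedSpace ℝ E] [CompleteSpace E]
  {G : ℝ → E → E} {a b : ℝ} {L : ℝ≥0}

theorem exists_forall_mem_Icc_hasDerivAt_of_lipschitzWith {C : ℝ≥0} (hab : a ≤ b)
    (hlip : ∀ t ∈ Icc a b, LipschitzWith L (G t))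
    (hcont : ∀ x, ContinuousOn (fun t ↦ G t x) (Icc a b))
    (hC : ∀ t ∈ Icc a b, ∀ x, ‖G t x‖ ≤ C) (x₀ : E) :
    ∃ w : ℝ → E, w a = x₀ ∧ ∀ t ∈ Icc a b, HasDerivAt w (G t (w t)) t := by
  -- Freezing the field outside `[a, b]` lets the solution run past both endpoints, which is what
  -- makes the derivatives there two-sided.
  let H : ℝ → E → E := fun t ↦ G (projIcc a b hab t)
  let a' : Icc (a - 1) (b + 1) := ⟨a, by linarith, by linarith⟩
  have hPL : IsPicardLindelof H a' x₀ (C * (b - a + 1).toNNReal) 0 C L :=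
    { lipschitzOnWith := fun t _ ↦ (hlip _ (projIcc a b hab t).2).lipschitzOnWith
      continuousOn := fun x _ ↦
        ((hcont x).comp_continuous (by fun_prop) fun t ↦ (projIcc a b hab t).2).continuousOn
      norm_le := fun t _ x _ ↦ hC _ (projIcc a b hab t).2 x
      mul_max_le := by
        have hmax : max (b + 1 - a) (a - (a - 1)) = b - a + 1 := by
          rw [max_eq_left (by linarith)]
          ring
        rw [NNReal.coe_mul, Real.coe_toNNReal _ (by linarith), NNReal.coe_zero, sub_zero, hmax] }
  obtain ⟨w, hwa, hw⟩ := hPL.exists_eq_forall_mem_Icc_hasDerivWithinAt₀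
  refine ⟨w, hwa, fun t ht ↦ ?_⟩
  have hHt : H t = G t := by simp only [H, projIcc_of_mem hab ht]
  rw [← hHt]
  exact (hw t ⟨by linarith [ht.1], by linarith [ht.2]⟩).hasDerivAt
    (Icc_mem_nhds (by linarith [ht.1]) (by linarith [ht.2]))

theorem exists_forall_mem_Icc_hasDerivAt_norm_le_of_lipschitzOnWith {R : ℝ} (hab : a ≤ b)
    (hR : 0 < R) (hlip : ∀ t ∈ Icc a b, LipschitzOnWith L (G t) (closedBall 0 R))
    (hzero : ∀ t ∈ Icc a b, G t 0 = 0)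
    (hcont : ∀ x ∈ closedBall 0 R, ContinuousOn (fun t ↦ G t x) (Icc a b))
    {w₀ : E} (hw₀ : ‖w₀‖ ≤ R * Real.exp (-(L * (b - a)))) :
    ∃ w : ℝ → E, w a = w₀ ∧ ∀ t ∈ Icc a b, HasDerivAt w (G t (w t)) t ∧ ‖w t‖ ≤ R := by
  let P : E → E := radialRetraction R
  have hP : ∀ x, P x ∈ closedBall 0 R := fun x ↦
    mem_closedBall_zero_iff.2 (norm_radialRetraction_le hR x)
  have hGP_lip : ∀ t ∈ Icc a b, LipschitzWith (L * 2) fun x ↦ G t (P x) := fun t ht ↦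
    lipschitzOnWith_univ.1 <|
      (hlip t ht).comp (lipschitzWith_radialRetraction hR).lipschitzOnWith fun x _ ↦ hP x
  have hGP_norm : ∀ t ∈ Icc a b, ∀ x, ‖G t (P x)‖ ≤ L * ‖P x‖ := fun t ht x ↦ by
    simpa [hzero t ht] using (hlip t ht).dist_le_mul _ (hP x) 0 (mem_closedBall_self hR.le)
  have hGP_bdd : ∀ t ∈ Icc a b, ∀ x, ‖G t (P x)‖ ≤ (L * R.toNNReal : ℝ≥0) := fun t ht x ↦ by
    rw [NNReal.coe_mul, Real.coe_toNNReal R hR.le]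
    exact (hGP_norm t ht x).trans (by gcongr; exact norm_radialRetraction_le hR x)
  obtain ⟨w, hwa, hw⟩ := exists_forall_mem_Icc_hasDerivAt_of_lipschitzWith hab hGP_lip
    (fun x ↦ hcont _ (hP x)) hGP_bdd w₀
  have hgronwall : ∀ t ∈ Icc a b, ‖w t‖ ≤ gronwallBound ‖w₀‖ L 0 (t - a) :=
    norm_le_gronwallBound_of_norm_deriv_right_le (f' := fun t ↦ G t (P (w t)))
      (fun t ht ↦ (hw t ht).continuousAt.continuousWithinAt)
      (fun t ht ↦ (hw t (Ico_subset_Icc_self ht)).hasDerivWithinAt) (by rw [hwa])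
      fun t ht ↦ by
        rw [add_zero]
        exact (hGP_norm t (Ico_subset_Icc_self ht) _).trans
          (by gcongr; exact norm_radialRetraction_le_norm hR _)
  have hwR : ∀ t ∈ Icc a b, ‖w t‖ ≤ R := fun t ht ↦ calc
    ‖w t‖ ≤ ‖w₀‖ * Real.exp (L * (t - a)) := by
      simpa only [gronwallBound_ε0] using hgronwall t ht
    _ ≤ R * Real.exp (-(L * (b - a))) * Real.exp (L * (b - a)) := by
      gcongr
      exact ht.2
    _ = R := by rw [mul_assoc, ← Real.exp_add, neg_add_cancel, Real.exp_zero, mul_one]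
  refine ⟨w, hwa, fun t ht ↦ ⟨?_, hwR t ht⟩⟩
  simpa only [P, radialRetraction_of_norm_le hR (hwR t ht)] using hw t ht

end InitialValueProblem

section ComplexPerturbation

variable {E : Type*} [NormedAddCommGroup E] [NormedSpace ℂ E] [CompleteSpace E]
  {F : ℝ → E → E} {U : Set E} {v : ℝ → E} {a b R M : ℝ}

theorem exists_forall_mem_Icc_hasDerivAt_norm_sub_le_of_differentiableOn (hab : a ≤ b)
    (hR : 0 < R) (hU : IsOpen U) (hcont : ∀ z ∈ U, ContinuousOn (fun t ↦ F t z) (Icc a b))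
    (hdiff : ∀ t ∈ Icc a b, DifferentiableOn ℂ (F t) U)
    (hM : ∀ t ∈ Icc a b, ∀ z ∈ U, ‖F t z‖ ≤ M)
    (hv : ∀ t ∈ Icc a b, HasDerivAt v (F t (v t)) t)
    (hvU : ∀ t ∈ Icc a b, ball (v t) (2 * R) ⊆ U)
    {w₀ : E} (hw₀ : ‖w₀‖ ≤ R * Real.exp (-(M / R * (b - a)))) :
    ∃ u : ℝ → E, u a = v a + w₀ ∧
      ∀ t ∈ Icc a b, HasDerivAt u (F t (u t)) t ∧ ‖u t - v t‖ ≤ R := by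
  have hv_mem : ∀ t ∈ Icc a b, ∀ x ∈ closedBall (0 : E) R, v t + x ∈ U := fun t ht x hx ↦
    hvU t ht <| by
      rw [mem_ball, dist_self_add_left]
      linarith [mem_closedBall_zero_iff.1 hx]
  have h0 : (0 : E) ∈ closedBall 0 R := mem_closedBall_self hR.le
  have ha : a ∈ Icc a b := left_mem_Icc.2 hab
  have hM_nonneg : 0 ≤ M := (norm_nonneg _).trans (hM a ha _ (hv_mem a ha 0 h0))
  have hF_cont : ContinuousOn (uncurry F) (Icc a b ×ˢ U) :=
    continuousOn_uncurry_of_differentiableOn_of_norm_le hU hcont hdiff hM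
  have hF_lip : ∀ t ∈ Icc a b,
      LipschitzOnWith (M / R).toNNReal (F t) (closedBall (v t) R) := fun t ht ↦ by
    have hthick : thickening R (closedBall (v t) R) ⊆ U := by
      rw [thickening_closedBall hR hR.le, ← two_mul]
      exact hvU t ht
    exact lipschitzOnWith_of_norm_le_on_thickening hR (convex_closedBall _ _)
      ((hdiff t ht).mono hthick) fun z hz ↦ hM t ht z (hthick hz)
  let G : ℝ → E → E := fun t x ↦ F t (v t + x) - F t (v t)
  have hG_lip : ∀ t ∈ Icc a b,
      LipschitzOnWith (M / R).toNNReal (G t) (closedBall 0 R) := fun t ht x hx y hy ↦ by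
    simpa [G] using hF_lip t ht (show v t + x ∈ _ by simpa using hx)
      (show v t + y ∈ _ by simpa using hy)
  have hG_cont : ∀ x ∈ closedBall (0 : E) R, ContinuousOn (fun t ↦ G t x) (Icc a b) := by
    have hv_cont : ContinuousOn v (Icc a b) := fun t ht ↦
      (hv t ht).continuousAt.continuousWithinAt
    have htranslate : ∀ x ∈ closedBall (0 : E) R,
        ContinuousOn (fun t ↦ F t (v t + x)) (Icc a b) := fun x hx ↦
      ODE.continuousOn_comp hF_cont (hv_cont.add continuousOn_const) fun t ht ↦ hv_mem t ht x hx
    exact fun x hx ↦ (htranslate x hx).sub (by simpa using htranslate 0 h0)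
  obtain ⟨w, hwa, hw⟩ := exists_forall_mem_Icc_hasDerivAt_norm_le_of_lipschitzOnWith hab hR
    hG_lip (by simp [G]) hG_cont (w₀ := w₀)
    (by rwa [Real.coe_toNNReal _ (div_nonneg hM_nonneg hR.le)])
  refine ⟨v + w, by rw [Pi.add_apply, hwa], fun t ht ↦ ⟨?_, ?_⟩⟩
  · simpa only [G, Pi.add_apply, add_sub_cancel] using (hv t ht).add (hw t ht).1
  · simpa only [Pi.add_apply, add_sub_cancel_left] using (hw t ht).2

end ComplexPerturbation

theorem ball_subset_Kset {X Xc : Type*} [NormedAddCommGroup X] [NormedSpace ℝ X]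
    [NormedAddCommGroup Xc] [NormedSpace ℂ Xc] (ι : X →ₗᵢ[ℝ] Xc) {K : Set X} {x : X}
    (hx : x ∈ closure K) (ρ : ℝ) : ball (ι x) ρ ⊆ Kset ι K ρ := fun z hz ↦
  ⟨x, hx, z - ι x, by simpa only [dist_eq_norm] using (mem_ball.1 hz).le, by abel⟩

theorem statement0_general {X Xc : Type*} [NormedAddCommGroup X] [NormedSpace ℝ X]
    [NormedAddCommGroup Xc] [NormedSpace ℂ Xc] [CompleteSpace Xc] (ι : X →ₗᵢ[ℝ] Xc) {K : Set X}
    {f : ℝ → X → X} {F : ℝ → Xc → Xc} {a b R M : ℝ} (hab : a ≤ b) (hR : 0 < R)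
    (hcont : ∀ z ∈ Kset ι K (2 * R), ContinuousOn (fun t ↦ F t z) (Icc a b))
    (hext : ∀ t ∈ Icc a b, ∀ x ∈ closure K, F t (ι x) = ι (f t x))
    (hdiff : ∀ t ∈ Icc a b, DifferentiableOn ℂ (F t) (Kset ι K (2 * R)))
    (hM : ∀ t ∈ Icc a b, ∀ z ∈ Kset ι K (2 * R), ‖F t z‖ ≤ M)
    {v : ℝ → X} (hv : ∀ t ∈ Icc a b, HasDerivAt v (f t (v t)) t ∧ v t ∈ closure K)
    {w₀ : Xc} (hw₀ : ‖w₀‖ ≤ R * Real.exp (-(M / R * (b - a)))) :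
    ∃ u : ℝ → Xc, u a = ι (v a) + w₀ ∧
      ∀ t ∈ Icc a b, HasDerivAt u (F t (u t)) t ∧ u t ∈ Kset ι K R := by
  have hint : interior (Kset ι K (2 * R)) ⊆ Kset ι K (2 * R) := interior_subset
  have hιv : ∀ t ∈ Icc a b, HasDerivAt (fun t ↦ ι (v t)) (F t (ι (v t))) t := fun t ht ↦ by
    rw [hext t ht _ (hv t ht).2]
    exact ι.toContinuousLinearMap.hasFDerivAt.comp_hasDerivAt t (hv t ht).1
  obtain ⟨u, hua, hu⟩ := exists_forall_mem_Icc_hasDerivAt_norm_sub_le_of_differentiableOn hab hR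
    isOpen_interior (fun z hz ↦ hcont z (hint hz)) (fun t ht ↦ (hdiff t ht).mono hint)
    (fun t ht z hz ↦ hM t ht z (hint hz)) hιv
    (fun t ht ↦ interior_maximal (ball_subset_Kset ι (hv t ht).2 _) isOpen_ball) hw₀
  exact ⟨u, hua, fun t ht ↦
    ⟨(hu t ht).1, v t, (hv t ht).2, u t - ι (v t), (hu t ht).2, (add_sub_cancel _ _).symm⟩⟩

/-- Under Assumptions (K) and (A), for every `u₀ ∈ U⁰`, every `ũ₀ ∈ X_ℂ` with
`‖ũ₀‖ ≤ R·exp(−M/R)`, every `ε ∈ (0,1]` and every `t ∈ [0,1]`, the solution of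
`u̇ = f_{t/ε}(u)`, `u(0) = u₀ + ũ₀` exists on `[0,1]` and remains in `K_R`. -/
theorem statement0
    {X Xc : Type*} [NormedAddCommGroup X] [NormedSpace ℝ X] [CompleteSpace X]
    [NormedAddCommGroup Xc] [NormedSpace ℂ Xc] [CompleteSpace Xc]
    (ι : X →ₗᵢ[ℝ] Xc)
    -- the sets K and U⁰
    (K U0 : Set X) (hKopen : IsOpen K) (hKbdd : Bornology.IsBounded (closure K))
    (hU0open : IsOpen U0) (hU0K : U0 ⊆ K)
    -- the vector field on X and its extension to the complexification
    (fX : ℝ → X → X) (fC : ℝ → Xc → Xc)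
    (hper : ∀ u, Function.Periodic (fun θ => fX θ u) 1)
    (hperC : ∀ u, Function.Periodic (fun θ => fC θ u) 1)
    -- Assumption (K)
    (hAssK : ∀ u₀ ∈ U0, ∀ ε ∈ Set.Ioc (0:ℝ) 1, ∃ u : ℝ → X, u 0 = u₀ ∧
      ∀ t ∈ Set.Icc (0:ℝ) 1, HasDerivAt u (fX (t/ε) (u t)) t ∧ u t ∈ K)
    -- Assumption (A)
    (R M : ℝ) (hR : 0 < R) (hM : 0 < M)
    (hcontθ : ∀ u, Continuous fun θ => fC θ u)
    (hext : ∀ θ, ∀ x : X, ι x ∈ Kset ι K (2*R) → fC θ (ι x) = ι (fX θ x))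
    (hanal : ∀ θ, AnalyticOn ℂ (fC θ) (Kset ι K (2*R)))
    (hbound : ∀ θ, ∀ u ∈ Kset ι K (2*R), ‖fC θ u‖ ≤ M) :
    -- conclusion
    ∀ u₀ ∈ U0, ∀ w₀ : Xc, ‖w₀‖ ≤ R * Real.exp (-(M/R)) →
    ∀ ε ∈ Set.Ioc (0:ℝ) 1,
    ∃ u : ℝ → Xc, u 0 = ι u₀ + w₀ ∧
      ∀ t ∈ Set.Icc (0:ℝ) 1, HasDerivAt u (fC (t/ε) (u t)) t ∧ u t ∈ Kset ι K R := by
  intro u₀ hu₀ w₀ hw₀ ε hε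
  obtain ⟨v, rfl, hv⟩ := hAssK u₀ hu₀ ε hε
  exact statement0_general ι (f := fun t ↦ fX (t / ε)) (F := fun t ↦ fC (t / ε)) zero_le_one hR
    (fun z _ ↦ ((hcontθ z).comp (continuous_id.div_const ε)).continuousOn)
    (fun t _ x hx ↦ hext (t / ε) x (ball_subset_Kset ι hx _ (mem_ball_self (by positivity))))
    (fun t _ ↦ (hanal (t / ε)).differentiableOn) (fun t _ ↦ hbound (t / ε))
    (fun t ht ↦ ⟨(hv t ht).1, subset_closure (hv t ht).2⟩) (by simpa using hw₀)
end

section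
/- Suppose Assumptions (K) and (A) hold, and let ε₀ = R/(8M). For every positive integer n and every ε > 0 such that (n+1)ε ≤ ε₀, the maps Φ^[n] and F^[n] given by the stroboscopic averaging iteration are well-defined, Φ^[n] is continuously differentiable with respect to θ, both Φ^[n]_θ (for each θ) and its average ⟨Φ^[n]⟩ are invertible with analytic inverse on K_R, and the following estimates hold: (i) ‖Φ^[n] − id‖_R ≤ R/(2(n+1)); (ii) ‖F^[n]‖_R ≤ 2M; (iii) ‖δ^[n]‖_R ≤ 2M (2(n+1)ε/ε₀)^n, where δ^[n]_θ(u) = (1/ε)∂_θΦ^[n]_θ(u) + ∂_uΦ^[n]_θ(u) F^[n](u) − f_θ(Φ^[n]_θ(u)) is the defect. -/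
open Set

/-- θ-average `⟨g⟩(u) = ∫₀¹ g_θ(u) dθ` of a 1-periodic map. -/
noncomputable def thAvg {Xc : Type*} [NormedAddCommGroup Xc] [NormedSpace ℂ Xc]
    (g : ℝ → Xc → Xc) (u : Xc) : Xc :=
  ∫ θ in (0:ℝ)..1, g θ u

/-- Averaged vector field `F(u) = (∂_u⟨φ⟩(u))⁻¹ ⟨f∘φ⟩(u)`. -/
noncomputable def aveField {Xc : Type*} [NormedAddCommGroup Xc] [NormedSpace ℂ Xc]
    (f φ : ℝ → Xc → Xc) (u : Xc) : Xc :=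
  (fderiv ℂ (thAvg φ) u).inverse (thAvg (fun θ v => f θ (φ θ v)) u)

/-- The stroboscopic averaging iteration: `Φ^[0] = id` and
`Φ^[k+1]_θ(u) = u + ε ∫₀^θ ( f_τ(Φ^[k]_τ(u)) − ∂_uΦ^[k]_τ(u) F^[k](u) ) dτ`. -/
noncomputable def PhiIter {Xc : Type*} [NormedAddCommGroup Xc] [NormedSpace ℂ Xc]
    (f : ℝ → Xc → Xc) (ε : ℝ) : ℕ → ℝ → Xc → Xc
  | 0 => fun _ u => u
  | k+1 => fun θ u => u + ε • ∫ τ in (0:ℝ)..θ,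
      (f τ (PhiIter f ε k τ u) -
        fderiv ℂ (PhiIter f ε k τ) u (aveField f (PhiIter f ε k) u))

/-- The defect `δ^[k]_θ(u) = (1/ε)∂_θΦ^[k]_θ(u) + ∂_uΦ^[k]_θ(u) F^[k](u) − f_θ(Φ^[k]_θ(u))`. -/
noncomputable def defect {Xc : Type*} [NormedAddCommGroup Xc] [NormedSpace ℂ Xc]
    (f : ℝ → Xc → Xc) (ε : ℝ) (k : ℕ) (θ : ℝ) (u : Xc) : Xc :=
  (1/ε) • deriv (fun τ => PhiIter f ε k τ u) θ
    + fderiv ℂ (PhiIter f ε k θ) u (aveField f (PhiIter f ε k) u)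
    - f θ (PhiIter f ε k θ u)

/-!
A 1-periodic family `Φ` of analytic maps that stays within `r / 2` of the identity has, by Cauchy's
estimate on balls of radius `r`, derivatives within `1 / 2` of the identity. Hence `∂⟨Φ⟩` is
invertible, the averaged field is bounded by `2M`, and the integrand of the next step is bounded by
`4M`. This integrand has mean zero, precisely by the choice of the averaged field, so its primitive
is 1-periodic and bounded by `2M`, and the next iterate is again within `r / 2` of the identity as
soon as `4εM ≤ r`. Every step costs a margin `r` of the complex neighbourhood; `r = R / (2(n+1))`
leaves room for `n` steps and for inverting the last iterate.

The difference of consecutive iterates is `-ε` times the primitive of the defect, which has mean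
zero, so it is bounded by half of `ε` times the defect. The defect of the next iterate is the
difference of two consecutive integrands, and Cauchy's estimates bound it by `8Mε / r` times the
previous defect.

Continuity in `θ` is the delicate point when the phase space is infinite-dimensional: pointwise
continuity in `θ`, analyticity in `u` and a uniform bound give analyticity as a map into the bounded
continuous functions of `θ`, because Cauchy's integral formula makes every Taylor coefficient
continuous in `θ`.
-/

open Metric Filter Topology MeasureTheory
open scoped BoundedContinuousFunction

section Cauchy

variable {E F : Type*} [NormedAddCommGroup E] [NormedSpace ℂ E]
  [NormedAddCommGroup F] [NormedSpace ℂ F]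

lemma norm_fderiv_apply_le_of_forall_mem_ball_norm_le {h : E → F} {u v : E} {ρ s C : ℝ}
    (hs : 0 < s) (hsρ : s * ‖v‖ < ρ) (hd : DifferentiableOn ℂ h (ball u ρ))
    (hC : ∀ w ∈ ball u ρ, ‖h w‖ ≤ C) :
    ‖fderiv ℂ h u v‖ ≤ C / s := by
  have hρ : 0 < ρ := (by positivity : 0 ≤ s * ‖v‖).trans_lt hsρ
  have hmaps : MapsTo (fun z : ℂ => u + z • v) (closedBall 0 s) (ball u ρ) := by
    intro z hz
    rw [mem_ball, dist_self_add_left, norm_smul]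
    rw [mem_closedBall_zero_iff] at hz
    exact (by gcongr : ‖z‖ * ‖v‖ ≤ s * ‖v‖).trans_lt hsρ
  have hdiff : DifferentiableOn ℂ (fun z : ℂ => h (u + z • v)) (closedBall 0 s) :=
    hd.comp (by fun_prop) hmaps
  have hderiv : HasDerivAt (fun z : ℂ => h (u + z • v)) (fderiv ℂ h u v) 0 :=
    (hd.differentiableAt (ball_mem_nhds u hρ)).hasFDerivAt.hasLineDerivAt v
  rw [← hderiv.deriv]
  exact Complex.norm_deriv_le_of_forall_mem_sphere_norm_le hs
    (hdiff.diffContOnCl_ball Subset.rfl) fun z hz => hC _ (hmaps (sphere_subset_closedBall hz))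

lemma norm_fderiv_le_of_forall_mem_ball_norm_le {h : E → F} {u : E} {ρ C : ℝ} (hρ : 0 < ρ)
    (hd : DifferentiableOn ℂ h (ball u ρ)) (hC : ∀ w ∈ ball u ρ, ‖h w‖ ≤ C) :
    ‖fderiv ℂ h u‖ ≤ C / ρ := by
  have hC0 : 0 ≤ C := (norm_nonneg _).trans (hC u (mem_ball_self hρ))
  refine ContinuousLinearMap.opNorm_le_bound _ (by positivity) fun v => ?_
  rcases eq_or_ne v 0 with rfl | hv
  · simp
  have hv' : 0 < ‖v‖ := norm_pos_iff.mpr hv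
  have hlim : Tendsto (fun s => C / s) (𝓝[<] (ρ / ‖v‖)) (𝓝 (C / (ρ / ‖v‖))) :=
    (tendsto_const_nhds.div tendsto_id (by positivity)).mono_left nhdsWithin_le_nhds
  have hle : ∀ᶠ s in 𝓝[<] (ρ / ‖v‖), ‖fderiv ℂ h u v‖ ≤ C / s :=
    eventually_of_mem (Ioo_mem_nhdsLT (by positivity : 0 < ρ / ‖v‖)) fun s hs =>
      norm_fderiv_apply_le_of_forall_mem_ball_norm_le hs.1 ((lt_div_iff₀ hv').1 hs.2) hd hC
  calc ‖fderiv ℂ h u v‖ ≤ C / (ρ / ‖v‖) := ge_of_tendsto hlim hle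
    _ = C / ρ * ‖v‖ := by field_simp

lemma norm_fderiv_sub_fderiv_le {h₁ h₂ : E → F} {u : E} {ρ d : ℝ} (hρ : 0 < ρ)
    (hd₁ : DifferentiableOn ℂ h₁ (ball u ρ)) (hd₂ : DifferentiableOn ℂ h₂ (ball u ρ))
    (hle : ∀ w ∈ ball u ρ, ‖h₁ w - h₂ w‖ ≤ d) :
    ‖fderiv ℂ h₁ u - fderiv ℂ h₂ u‖ ≤ d / ρ := by
  have hu := ball_mem_nhds u hρ
  rw [← fderiv_fun_sub (hd₁.differentiableAt hu) (hd₂.differentiableAt hu)]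
  exact norm_fderiv_le_of_forall_mem_ball_norm_le hρ (hd₁.sub hd₂) hle

lemma norm_sub_le_of_forall_mem_ball_norm_le {h : E → F} {u x y : E} {s t C : ℝ}
    (ht : 0 < t) (hd : DifferentiableOn ℂ h (ball u (s + t)))
    (hC : ∀ w ∈ ball u (s + t), ‖h w‖ ≤ C) (hx : x ∈ closedBall u s) (hy : y ∈ closedBall u s) :
    ‖h y - h x‖ ≤ C / t * ‖y - x‖ := by
  refine (convex_closedBall u s).norm_image_sub_le_of_norm_fderiv_le (𝕜 := ℂ) (fun z hz => ?_)
    (fun z hz => ?_) hx hy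
  · exact hd.differentiableAt (isOpen_ball.mem_nhds (closedBall_subset_ball (by linarith) hz))
  · have hsub : ball z t ⊆ ball u (s + t) :=
      ball_subset_ball' (by rw [mem_closedBall] at hz; linarith)
    exact norm_fderiv_le_of_forall_mem_ball_norm_le ht (hd.mono hsub) fun w hw => hC w (hsub hw)

lemma norm_iteratedFDeriv_le_of_forall_mem_ball_norm_le [CompleteSpace F] {h : E → F} {u : E}
    {ρ C s : ℝ} (hs : 0 < s) (hd : AnalyticOnNhd ℂ h (ball u ρ))
    (hC : ∀ w ∈ ball u ρ, ‖h w‖ ≤ C) (n : ℕ) :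
    ∀ w ∈ ball u (ρ - n * s), ‖iteratedFDeriv ℂ n h w‖ ≤ C / s ^ n := by
  induction n with
  | zero => intro w hw; simpa using hC w (by simpa using hw)
  | succ n ih =>
    intro w hw
    have hsub : ball w s ⊆ ball u (ρ - n * s) := by
      refine ball_subset_ball' ?_
      rw [mem_ball] at hw
      push_cast at hw
      linarith
    have hsub' : ball w s ⊆ ball u ρ :=
      hsub.trans (ball_subset_ball (sub_le_self _ (by positivity)))
    rw [← norm_fderiv_iteratedFDeriv, pow_succ, ← div_div]
    exact norm_fderiv_le_of_forall_mem_ball_norm_le hs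
      ((hd.iteratedFDeriv n).differentiableOn.mono hsub') fun x hx => ih x (hsub hx)

-- The factor `2e` comes from `n` Cauchy steps of length `ρ / (2n)` and from `n ^ n ≤ n! * e ^ n`.
lemma norm_inv_factorial_smul_iteratedFDeriv_le [CompleteSpace F] {h : E → F} {u : E} {ρ C : ℝ}
    (hρ : 0 < ρ) (hd : AnalyticOnNhd ℂ h (ball u ρ)) (hC : ∀ w ∈ ball u ρ, ‖h w‖ ≤ C) (n : ℕ) :
    ‖(n.factorial : ℂ)⁻¹ • iteratedFDeriv ℂ n h u‖ ≤ C * (2 * Real.exp 1 / ρ) ^ n := by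
  have hC0 : 0 ≤ C := (norm_nonneg _).trans (hC u (mem_ball_self hρ))
  rcases Nat.eq_zero_or_pos n with rfl | hn
  · simpa using hC u (mem_ball_self hρ)
  have hn' : (0 : ℝ) < n := by exact_mod_cast hn
  have hmem : u ∈ ball u (ρ - n * (ρ / (2 * n))) := by
    apply mem_ball_self
    field_simp
    linarith
  have hcauchy := norm_iteratedFDeriv_le_of_forall_mem_ball_norm_le
    (s := ρ / (2 * n)) (by positivity) hd hC n u hmem
  have hexp : (n : ℝ) ^ n / n.factorial ≤ Real.exp 1 ^ n := by
    simpa [← Real.exp_nat_mul] using Real.pow_div_factorial_le_exp (n : ℝ) hn'.le n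
  rw [norm_smul, norm_inv, Complex.norm_natCast]
  calc ((n.factorial : ℝ))⁻¹ * ‖iteratedFDeriv ℂ n h u‖
      ≤ (n.factorial : ℝ)⁻¹ * (C / (ρ / (2 * n)) ^ n) := by gcongr
    _ = C * (2 / ρ) ^ n * ((n : ℝ) ^ n / n.factorial) := by
        rw [div_pow, div_pow, mul_pow]; field_simp
    _ ≤ C * (2 / ρ) ^ n * Real.exp 1 ^ n := by gcongr
    _ = C * (2 * Real.exp 1 / ρ) ^ n := by rw [mul_assoc, ← mul_pow]; congr 2; ring

lemma iteratedDeriv_comp_add_smul [CompleteSpace F] {h : E → F} {O : Set E} (hO : IsOpen O)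
    (hd : AnalyticOnNhd ℂ h O) (u v : E) (n : ℕ) {z : ℂ} (hz : u + z • v ∈ O) :
    iteratedDeriv n (fun z : ℂ => h (u + z • v)) z =
      iteratedFDeriv ℂ n h (u + z • v) fun _ => v := by
  induction n generalizing z with
  | zero => simp
  | succ n ih =>
    have hline : HasDerivAt (fun z : ℂ => u + z • v) v z := by
      simpa using ((hasDerivAt_id z).smul_const v).const_add u
    have hnear : ∀ᶠ z' in 𝓝 z, u + z' • v ∈ O := hline.continuousAt (hO.mem_nhds hz)
    have hiter := (hd.iteratedFDeriv n _ hz).differentiableAt.hasFDerivAt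
    have hderiv := (hiter.continuousMultilinear_apply_const fun _ => v).comp_hasDerivAt z hline
    rw [iteratedDeriv_succ, EventuallyEq.deriv_eq (hnear.mono fun z' hz' => ih hz')]
    exact hderiv.deriv

lemma hasSum_taylorSeries_of_mem_ball [CompleteSpace F] {h : E → F} {u v : E} {ρ : ℝ}
    (hd : AnalyticOnNhd ℂ h (ball u ρ)) (hv : ‖v‖ < ρ) :
    HasSum (fun n : ℕ => ((n.factorial : ℂ)⁻¹ • iteratedFDeriv ℂ n h u) fun _ => v)
      (h (u + v)) := by
  obtain ⟨s, hsv, hs⟩ : ∃ s, s * ‖v‖ < ρ ∧ 1 < s := by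
    have hnear : ∀ᶠ s in 𝓝 (1 : ℝ), s * ‖v‖ < ρ :=
      (continuous_id.mul continuous_const).continuousAt.eventually_lt_const (by simpa)
    exact ((hnear.filter_mono nhdsWithin_le_nhds).and self_mem_nhdsWithin).exists (f := 𝓝[>] 1)
  have hmaps : MapsTo (fun z : ℂ => u + z • v) (ball 0 s) (ball u ρ) := by
    intro z hz
    rw [mem_ball, dist_self_add_left, norm_smul]
    rw [mem_ball_zero_iff] at hz
    exact (by gcongr : ‖z‖ * ‖v‖ ≤ s * ‖v‖).trans_lt hsv
  have hdiff : DifferentiableOn ℂ (fun z : ℂ => h (u + z • v)) (ball 0 s) :=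
    hd.differentiableOn.comp (by fun_prop) hmaps
  have hsum := Complex.hasSum_taylorSeries_on_ball hdiff (z := 1) (by simpa using hs)
  simpa [iteratedDeriv_comp_add_smul isOpen_ball hd u v _
    (hmaps (mem_ball_self (one_pos.trans hs)))] using hsum

end Cauchy

section ParameterDependence

variable {α E F : Type*} [TopologicalSpace α] [FirstCountableTopology α]
  [NormedAddCommGroup E] [NormedSpace ℂ E]
  [NormedAddCommGroup F] [NormedSpace ℂ F] [CompleteSpace F]

lemma continuous_deriv_of_forall_mem_sphere {g : α → ℂ → F} {z : ℂ} {U : Set ℂ} {r C : ℝ}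
    (hU : IsOpen U) (hr : 0 < r) (hrU : closedBall z r ⊆ U)
    (hd : ∀ τ, DifferentiableOn ℂ (g τ) U) (hC : ∀ τ, ∀ w ∈ sphere z r, ‖g τ w‖ ≤ C)
    (hcont : ∀ w ∈ sphere z r, Continuous fun τ => g τ w) :
    Continuous fun τ => deriv (g τ) z := by
  have hmem : ∀ φ, circleMap z r φ ∈ sphere z r := circleMap_mem_sphere z hr.le
  have hne : ∀ φ, (circleMap z r φ - z) ^ 2 ≠ 0 := fun φ =>
    pow_ne_zero 2 (sub_ne_zero.2 (circleMap_ne_center hr.ne'))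
  have hcauchy : (fun τ => deriv (g τ) z) = fun τ => Complex.cderiv r (g τ) z :=
    funext fun τ => (Complex.cderiv_eq_deriv hU (hd τ) hr hrU).symm
  rw [hcauchy]
  refine Continuous.const_smul ?_ _
  refine intervalIntegral.continuous_of_dominated_interval
    (bound := fun _ => r * ((r ^ 2)⁻¹ * C)) (fun τ => ?_) (fun τ => ?_)
    intervalIntegrable_const (Eventually.of_forall fun φ _ => ?_)
  · have hg : Continuous fun φ => g τ (circleMap z r φ) :=
      (hd τ).continuousOn.comp_continuous (continuous_circleMap z r)
        fun φ => hrU (sphere_subset_closedBall (hmem φ))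
    have hinv : Continuous fun φ => ((circleMap z r φ - z) ^ 2)⁻¹ :=
      (((continuous_circleMap z r).sub continuous_const).pow 2).inv₀ hne
    have hder : Continuous fun φ => deriv (circleMap z r) φ := by
      simp only [deriv_circleMap]
      fun_prop
    exact (hder.smul (hinv.smul hg)).aestronglyMeasurable
  · refine Eventually.of_forall fun φ _ => ?_
    have := hC τ _ (hmem φ)
    simp only [deriv_circleMap, norm_smul, norm_inv, norm_pow, norm_mul, norm_circleMap_zero,
      circleMap_sub_center, Complex.norm_I, mul_one, abs_of_pos hr]
    gcongr
  · exact ((hcont _ (hmem φ)).const_smul _).const_smul _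

lemma continuous_fderiv_apply_of_forall_mem_ball {g : α → E → F} {u : E} {ρ C : ℝ} (hρ : 0 < ρ)
    (hd : ∀ τ, DifferentiableOn ℂ (g τ) (ball u ρ)) (hC : ∀ τ, ∀ w ∈ ball u ρ, ‖g τ w‖ ≤ C)
    (hcont : ∀ w ∈ ball u ρ, Continuous fun τ => g τ w) (v : E) :
    Continuous fun τ => fderiv ℂ (g τ) u v := by
  set U : Set ℂ := (fun z : ℂ => u + z • v) ⁻¹' ball u ρ
  have hline : Continuous fun z : ℂ => u + z • v := by fun_prop
  have hU : IsOpen U := isOpen_ball.preimage hline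
  obtain ⟨r, hr, hrU⟩ : ∃ r > 0, closedBall (0 : ℂ) r ⊆ U :=
    nhds_basis_closedBall.mem_iff.1 (hU.mem_nhds (by simpa [U] using hρ))
  have hderiv : ∀ τ, deriv (fun z : ℂ => g τ (u + z • v)) 0 = fderiv ℂ (g τ) u v := fun τ =>
    (((hd τ).differentiableAt (ball_mem_nhds u hρ)).hasFDerivAt.hasLineDerivAt v).deriv
  simp only [← hderiv]
  exact continuous_deriv_of_forall_mem_sphere hU hr hrU
    (fun τ => (hd τ).comp (by fun_prop) fun z hz => hz)
    (fun τ z hz => hC τ _ (hrU (sphere_subset_closedBall hz)))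
    fun z hz => hcont _ (hrU (sphere_subset_closedBall hz))

lemma continuous_iteratedFDeriv_apply_of_forall_mem_ball {g : α → E → F} {u : E} {ρ C : ℝ}
    (hd : ∀ τ, AnalyticOnNhd ℂ (g τ) (ball u ρ)) (hC : ∀ τ, ∀ w ∈ ball u ρ, ‖g τ w‖ ≤ C)
    (hcont : ∀ w ∈ ball u ρ, Continuous fun τ => g τ w) (n : ℕ) :
    ∀ w ∈ ball u ρ, ∀ m : Fin n → E, Continuous fun τ => iteratedFDeriv ℂ n (g τ) w m := by
  induction n with
  | zero => simpa using hcont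
  | succ n ih =>
    intro w hw m
    obtain ⟨σ, hσ, hwσ⟩ := Metric.isOpen_iff.1 isOpen_ball w hw
    set s : ℝ := σ / (n + 1) with hs
    have hs0 : 0 < s := by positivity
    have hσs : σ - n * s = s := by rw [hs]; field_simp; ring
    have hws : ball w s ⊆ ball u ρ :=
      (ball_subset_ball (hσs ▸ sub_le_self _ (by positivity))).trans hwσ
    have hdiff : ∀ τ, ∀ x ∈ ball u ρ, HasFDerivAt (iteratedFDeriv ℂ n (g τ))
        (fderiv ℂ (iteratedFDeriv ℂ n (g τ)) x) x := fun τ x hx =>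
      ((hd τ).iteratedFDeriv n x hx).differentiableAt.hasFDerivAt
    have hbound : ∀ τ, ∀ x ∈ ball w s,
        ‖iteratedFDeriv ℂ n (g τ) x (Fin.tail m)‖ ≤ C / s ^ n * ∏ i, ‖Fin.tail m i‖ := by
      intro τ x hx
      refine ContinuousMultilinearMap.le_of_opNorm_le ?_ _
      exact norm_iteratedFDeriv_le_of_forall_mem_ball_norm_le hs0 ((hd τ).mono hwσ)
        (fun y hy => hC τ y (hwσ hy)) n x (hσs.symm ▸ hx)
    have hnext := continuous_fderiv_apply_of_forall_mem_ball hs0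
      (fun τ x hx => ((hdiff τ x (hws hx)).continuousMultilinear_apply_const
        (Fin.tail m)).differentiableAt.differentiableWithinAt)
      hbound (fun x hx => ih x (hws hx) (Fin.tail m)) (m 0)
    refine hnext.congr fun τ => ?_
    rw [((hdiff τ w hw).continuousMultilinear_apply_const (Fin.tail m)).fderiv,
      iteratedFDeriv_succ_apply_left]
    rfl

end ParameterDependence

section Multilinear

variable {𝕜 α ι F : Type*} {M : ι → Type*} [NontriviallyNormedField 𝕜] [TopologicalSpace α]
  [Fintype ι] [∀ i, NormedAddCommGroup (M i)] [∀ i, NormedSpace 𝕜 (M i)]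
  [NormedAddCommGroup F] [NormedSpace 𝕜 F]

lemma exists_continuousMultilinearMap_eq_of_continuous_apply
    {A : α → ContinuousMultilinearMap 𝕜 M F} {B : ℝ} (hB0 : 0 ≤ B) (hB : ∀ τ, ‖A τ‖ ≤ B)
    (hcont : ∀ m, Continuous fun τ => A τ m) :
    ∃ P : ContinuousMultilinearMap 𝕜 M (α →ᵇ F), (∀ m τ, P m τ = A τ m) ∧ ‖P‖ ≤ B := by
  have hbound : ∀ m τ, ‖A τ m‖ ≤ B * ∏ i, ‖m i‖ := fun m τ => (A τ).le_of_opNorm_le (hB τ) m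
  let P₀ : MultilinearMap 𝕜 M (α →ᵇ F) :=
    { toFun := fun m => .ofNormedAddCommGroup (fun τ => A τ m) (hcont m) _ (hbound m)
      map_update_add' := fun m i x y => by ext τ; simp
      map_update_smul' := fun m i c x => by ext τ; simp }
  have hP₀ : ∀ m, ‖P₀ m‖ ≤ B * ∏ i, ‖m i‖ := fun m =>
    (BoundedContinuousFunction.norm_le (by positivity)).2 (hbound m)
  exact ⟨P₀.mkContinuous B hP₀, fun m τ => rfl, P₀.mkContinuous_norm_le hB0 hP₀⟩

end Multilinear

section AnalyticFamily

variable {α E F : Type*} [TopologicalSpace α] [NormedAddCommGroup E] [NormedSpace ℂ E]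
  [NormedAddCommGroup F] [NormedSpace ℂ F]

/-- A family `g τ : E → F` that is analytic on `O` jointly, in the sense that `w ↦ (τ ↦ g τ w)` is
an analytic map from `O` into the space of bounded continuous functions of the parameter `τ`.
Evaluation and integration in `τ` are continuous linear on that space, so they commute with
differentiation in `w`. -/
def AnalyticFamilyOn (g : α → E → F) (O : Set E) : Prop :=
  ∃ G : E → (α →ᵇ F), AnalyticOnNhd ℂ G O ∧ ∀ w ∈ O, ∀ τ, G w τ = g τ w

lemma analyticAt_of_forall_norm_le_of_continuous [FirstCountableTopology α] [CompleteSpace F]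
    {G : E → (α →ᵇ F)} {u : E} {ρ C : ℝ} (hρ : 0 < ρ)
    (hd : ∀ τ, AnalyticOnNhd ℂ (fun w => G w τ) (ball u ρ)) (hC : ∀ w ∈ ball u ρ, ‖G w‖ ≤ C) :
    AnalyticAt ℂ G u := by
  have hC0 : 0 ≤ C := (norm_nonneg _).trans (hC u (mem_ball_self hρ))
  have hCτ : ∀ τ, ∀ w ∈ ball u ρ, ‖G w τ‖ ≤ C := fun τ w hw =>
    ((G w).norm_coe_le_norm τ).trans (hC w hw)
  set a : ℝ := 2 * Real.exp 1 / ρ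
  have ha : 0 < a := by positivity
  choose p hp hpC using fun n : ℕ => exists_continuousMultilinearMap_eq_of_continuous_apply
    (A := fun τ => (n.factorial : ℂ)⁻¹ • iteratedFDeriv ℂ n (fun w => G w τ) u)
    (by positivity : 0 ≤ C * a ^ n)
    (fun τ => norm_inv_factorial_smul_iteratedFDeriv_le hρ (hd τ) (hCτ τ) n)
    (fun m => (continuous_iteratedFDeriv_apply_of_forall_mem_ball hd hCτ
      (fun w _ => (G w).continuous) n u (mem_ball_self hρ) m).const_smul _)
  let q : FormalMultilinearSeries ℂ E (α →ᵇ F) := p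
  have hradius : 0 < q.radius := by
    refine (ENNReal.ofReal_pos.2 (inv_pos.2 ha)).trans_le (q.le_radius_of_bound C fun n => ?_)
    rw [Real.coe_toNNReal _ (by positivity), inv_pow, ← div_eq_mul_inv, div_le_iff₀ (by positivity)]
    exact hpC n
  have hq := q.hasFPowerSeriesOnBall hradius
  have heq : ∀ᶠ y in 𝓝 0, q.sum y = G (u + y) := by
    filter_upwards [Metric.eball_mem_nhds 0 hradius, ball_mem_nhds 0 hρ] with y hy hyρ
    ext τ
    refine HasSum.unique ?_ (hasSum_taylorSeries_of_mem_ball (hd τ) (mem_ball_zero_iff.1 hyρ))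
    simpa [q, hp] using (BoundedContinuousFunction.evalCLM ℂ τ).hasSum (hq.hasSum hy)
  have hG₀ : AnalyticAt ℂ (fun y => G (u + y)) 0 := hq.analyticAt.congr heq
  simpa [Function.comp_def] using hG₀.comp_of_eq (f := fun w => w - u) (by fun_prop) (sub_self u)

lemma analyticFamilyOn_of_norm_le [FirstCountableTopology α] [CompleteSpace F]
    {g : α → E → F} {O : Set E} {B : E → ℝ} (hO : IsOpen O)
    (han : ∀ τ, AnalyticOnNhd ℂ (g τ) O) (hcont : ∀ w ∈ O, Continuous fun τ => g τ w)
    (hB : ContinuousOn B O) (hgB : ∀ τ, ∀ w ∈ O, ‖g τ w‖ ≤ B w) :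
    AnalyticFamilyOn g O := by
  classical
  let G : E → (α →ᵇ F) := fun w => if hw : w ∈ O then
    .ofNormedAddCommGroup (fun τ => g τ w) (hcont w hw) (B w) fun τ => hgB τ w hw else 0
  have hG : ∀ w ∈ O, ∀ τ, G w τ = g τ w := fun w hw τ => by simp [G, hw]
  refine ⟨G, fun u hu => ?_, hG⟩
  have hlocal : ∀ᶠ w in 𝓝 u, w ∈ O ∧ B w < B u + 1 :=
    (hO.eventually_mem hu).and
      ((hB.continuousAt (hO.mem_nhds hu)).eventually_lt_const (lt_add_one _))
  obtain ⟨ρ, hρ, hρO⟩ := Metric.eventually_nhds_iff_ball.1 hlocal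
  refine analyticAt_of_forall_norm_le_of_continuous (C := max (B u + 1) 0) hρ
    (fun τ => ?_) fun w hw => ?_
  · exact ((han τ).mono fun w hw => (hρO w hw).1).congr isOpen_ball
      fun w hw => (hG w (hρO w hw).1 τ).symm
  · refine (BoundedContinuousFunction.norm_le (le_max_right _ _)).2 fun τ => ?_
    rw [hG w (hρO w hw).1]
    exact (hgB τ w (hρO w hw).1).trans ((hρO w hw).2.le.trans (le_max_left _ _))

namespace AnalyticFamilyOn

variable {g g' : α → E → F} {O O' : Set E}

lemma mono (hg : AnalyticFamilyOn g O) (h : O' ⊆ O) : AnalyticFamilyOn g O' :=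
  let ⟨G, hG, hGg⟩ := hg
  ⟨G, hG.mono h, fun w hw => hGg w (h hw)⟩

lemma continuous (hg : AnalyticFamilyOn g O) {w : E} (hw : w ∈ O) :
    Continuous fun τ => g τ w :=
  let ⟨G, _, hGg⟩ := hg
  (G w).continuous.congr (hGg w hw)

lemma sub (hg : AnalyticFamilyOn g O) (hg' : AnalyticFamilyOn g' O) :
    AnalyticFamilyOn (fun τ w => g τ w - g' τ w) O :=
  let ⟨G, hG, hGg⟩ := hg
  let ⟨G', hG', hGg'⟩ := hg'
  ⟨fun w => G w - G' w, hG.sub hG', fun w hw τ => by simp [hGg w hw, hGg' w hw]⟩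

lemma analyticOnNhd (hg : AnalyticFamilyOn g O) (hO : IsOpen O) (τ : α) :
    AnalyticOnNhd ℂ (g τ) O :=
  let ⟨G, hG, hGg⟩ := hg
  AnalyticOnNhd.congr (f := BoundedContinuousFunction.evalCLM ℂ τ ∘ G) hO
    ((BoundedContinuousFunction.evalCLM ℂ τ).comp_analyticOnNhd hG) fun w hw => hGg w hw τ

lemma hasFDerivAt_of_forall_apply_eq {G : E → (α →ᵇ F)} (hO : IsOpen O)
    (hGg : ∀ w ∈ O, ∀ τ, G w τ = g τ w) {w : E} (hw : w ∈ O) (hG : DifferentiableAt ℂ G w) (τ : α) :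
    HasFDerivAt (g τ) (BoundedContinuousFunction.evalCLM ℂ τ ∘L fderiv ℂ G w) w :=
  ((BoundedContinuousFunction.evalCLM ℂ τ).hasFDerivAt.comp w hG.hasFDerivAt).congr_of_eventuallyEq
    ((hO.eventually_mem hw).mono fun w' hw' => (hGg w' hw' τ).symm)

lemma fderiv_apply [CompleteSpace F] (hg : AnalyticFamilyOn g O) (hO : IsOpen O) {x : E → E}
    (hx : AnalyticOnNhd ℂ x O) : AnalyticFamilyOn (fun τ w => fderiv ℂ (g τ) w (x w)) O := by
  obtain ⟨G, hG, hGg⟩ := hg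
  refine ⟨fun w => fderiv ℂ G w (x w), fun w hw => ?_, fun w hw τ => ?_⟩
  · exact ((ContinuousLinearMap.id ℂ (E →L[ℂ] (α →ᵇ F))).analyticAt_bilinear _).comp₂
      (hG.fderiv w hw) (hx w hw)
  dsimp only
  rw [(hasFDerivAt_of_forall_apply_eq hO hGg hw (hG w hw).differentiableAt τ).fderiv]
  rfl

end AnalyticFamilyOn

end AnalyticFamily

section IntegralFamily

variable {E F : Type*} [NormedAddCommGroup E] [NormedSpace ℂ E]
  [NormedAddCommGroup F] [NormedSpace ℂ F]

lemma exists_intervalIntegral_eq_clm (a b : ℝ) :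
    ∃ I : (ℝ →ᵇ F) →L[ℂ] F, ∀ g, I g = ∫ τ in a..b, g τ := by
  have hintegrable : ∀ g : ℝ →ᵇ F, IntervalIntegrable g volume a b := fun g =>
    g.continuous.intervalIntegrable a b
  let I₀ : (ℝ →ᵇ F) →ₗ[ℂ] F :=
    { toFun := fun g => ∫ τ in a..b, g τ
      map_add' := fun g h => intervalIntegral.integral_add (hintegrable g) (hintegrable h)
      map_smul' := fun c g => intervalIntegral.integral_smul c g }
  refine ⟨I₀.mkContinuous |b - a| fun g => ?_, fun g => rfl⟩
  rw [mul_comm]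
  exact intervalIntegral.norm_integral_le_of_norm_le_const fun τ _ => g.norm_coe_le_norm τ

namespace AnalyticFamilyOn

variable {g : ℝ → E → F} {O : Set E}

lemma fderiv_intervalIntegral_apply (hg : AnalyticFamilyOn g O) (hO : IsOpen O) (a b : ℝ) {w : E}
    (hw : w ∈ O) (v : E) :
    fderiv ℂ (fun u => ∫ τ in a..b, g τ u) w v = ∫ τ in a..b, fderiv ℂ (g τ) w v := by
  obtain ⟨G, hG, hGg⟩ := hg
  obtain ⟨I, hI⟩ := exists_intervalIntegral_eq_clm (F := F) a b
  have hdiff := (hG w hw).differentiableAt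
  have heq : (fun u => ∫ τ in a..b, g τ u) =ᶠ[𝓝 w] I ∘ G :=
    (hO.eventually_mem hw).mono fun u hu => by simp only [Function.comp_apply, hI, hGg u hu]
  simp only [(hasFDerivAt_of_forall_apply_eq hO hGg hw hdiff _).fderiv, heq.fderiv_eq,
    (I.hasFDerivAt.comp w hdiff.hasFDerivAt).fderiv]
  exact hI _

lemma analyticOnNhd_intervalIntegral (hg : AnalyticFamilyOn g O) (hO : IsOpen O) (a b : ℝ) :
    AnalyticOnNhd ℂ (fun u => ∫ τ in a..b, g τ u) O := by
  obtain ⟨G, hG, hGg⟩ := hg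
  obtain ⟨I, hI⟩ := exists_intervalIntegral_eq_clm (F := F) a b
  refine (I.comp_analyticOnNhd hG).congr hO fun u hu => ?_
  simp only [Function.comp_apply, hI, hGg u hu]

end AnalyticFamilyOn

end IntegralFamily

section LocalInverse

variable {𝕜 E F : Type*} [NontriviallyNormedField 𝕜]
  [NormedAddCommGroup E] [NormedSpace 𝕜 E] [CompleteSpace E]
  [NormedAddCommGroup F] [NormedSpace 𝕜 F]

lemma analyticAt_invFunOn [Nonempty E] {φ : E → F} {V : Set E} {x : E} (hV : V ∈ 𝓝 x)
    (hinj : InjOn φ V) (hφ : AnalyticAt 𝕜 φ x) (hinv : (fderiv 𝕜 φ x).IsInvertible) :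
    AnalyticAt 𝕜 (Function.invFunOn φ V) (φ x) := by
  obtain ⟨e, he⟩ := hinv
  have hstrict : HasStrictFDerivAt φ (e : E →L[𝕜] F) x := he ▸ hφ.hasStrictFDerivAt
  have hlocal : AnalyticAt 𝕜 (hstrict.localInverse φ e x) (φ x) :=
    (hstrict.toOpenPartialHomeomorph φ).analyticAt_symm' (i := e)
      hstrict.mem_toOpenPartialHomeomorph_source hφ he.symm
  refine hlocal.congr (EventuallyEq.symm (hstrict.localInverse_unique ?_))
  filter_upwards [hV] with y hy using hinj.leftInvOn_invFunOn hy

end LocalInverse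

section NearIdentity

variable {E : Type*} [NormedAddCommGroup E] [NormedSpace ℂ E]

lemma norm_le_two_mul_norm_apply {A : E →L[ℂ] E} (hA : ‖A - .id ℂ E‖ ≤ 1 / 2) (x : E) :
    ‖x‖ ≤ 2 * ‖A x‖ := by
  have hAx : ‖A x - x‖ ≤ 1 / 2 * ‖x‖ :=
    ContinuousLinearMap.le_of_opNorm_le (A - ContinuousLinearMap.id ℂ E) hA x
  have := norm_sub_norm_le x (A x)
  rw [norm_sub_rev] at hAx
  linarith

lemma isInvertible_of_norm_sub_id_le [CompleteSpace E] {A : E →L[ℂ] E}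
    (hA : ‖A - .id ℂ E‖ ≤ 1 / 2) : A.IsInvertible := by
  have hsmall : ‖.id ℂ E - A‖ < 1 := by
    rw [norm_sub_rev]
    linarith
  refine ⟨.unitsEquiv ℂ E (Units.oneSub _ hsmall), ?_⟩
  ext x
  simp

lemma norm_fderiv_sub_id_le {φ : E → E} {x : E} {r : ℝ} (hr : 0 < r)
    (hd : DifferentiableOn ℂ φ (ball x r)) (hφ : ∀ w ∈ ball x r, ‖φ w - w‖ ≤ r / 2) :
    ‖fderiv ℂ φ x - .id ℂ E‖ ≤ 1 / 2 := by
  have h := norm_fderiv_sub_fderiv_le hr hd differentiableOn_id hφ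
  rwa [fderiv_id, div_div_cancel_left' hr.ne', inv_eq_one_div] at h

lemma approximatesLinearOn_id_of_norm_sub_le {φ : E → E} {u : E} {r s : ℝ} (hr : 0 < r)
    (hd : DifferentiableOn ℂ φ (ball u (s + r)))
    (hφ : ∀ w ∈ ball u (s + r), ‖φ w - w‖ ≤ r / 2) :
    ApproximatesLinearOn φ (.id ℂ E) (closedBall u s) (1 / 2) := by
  intro x hx y hy
  have hlip := norm_sub_le_of_forall_mem_ball_norm_le (h := fun w => φ w - w) hr
    (hd.sub differentiableOn_id) hφ hy hx
  rw [div_div_cancel_left' hr.ne', inv_eq_one_div] at hlip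
  convert hlip using 2
  · simp only [ContinuousLinearMap.id_apply]
    abel
  · simp

lemma injOn_of_norm_sub_le {φ : E → E} {V : Set E} {r : ℝ} (hr : 0 < r)
    (hd : DifferentiableOn ℂ φ (thickening (2 * r) V))
    (hφ : ∀ w ∈ thickening (2 * r) V, ‖φ w - w‖ ≤ r / 2) : InjOn φ V := by
  intro x hx y hy hxy
  have hball : ball x (r + r) ⊆ thickening (2 * r) V := two_mul r ▸ ball_subset_thickening hx _
  have hclose : ‖y - x‖ ≤ r :=
    calc ‖y - x‖ = ‖(φ x - x) - (φ y - y)‖ := by rw [hxy]; congr 1; abel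
      _ ≤ r / 2 + r / 2 := norm_sub_le_of_le
          (hφ x (self_subset_thickening (by positivity) _ hx))
          (hφ y (self_subset_thickening (by positivity) _ hy))
      _ = r := add_halves r
  have hlip := approximatesLinearOn_id_of_norm_sub_le hr (hd.mono hball)
    (fun w hw => hφ w (hball hw)) x (mem_closedBall_self hr.le) y (mem_closedBall_iff_norm.2 hclose)
  rw [hxy, sub_self, zero_sub, norm_neg, ContinuousLinearMap.id_apply] at hlip
  rw [← sub_eq_zero, ← norm_eq_zero]
  push_cast at hlip
  linarith [norm_nonneg (x - y)]

lemma exists_mem_closedBall_eq_of_norm_sub_le [CompleteSpace E] {φ : E → E} {y : E} {r : ℝ}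
    (hr : 0 < r) (hd : DifferentiableOn ℂ φ (ball y (2 * r)))
    (hφ : ∀ w ∈ ball y (2 * r), ‖φ w - w‖ ≤ r / 2) : ∃ x ∈ closedBall y (r / 2), φ x = y := by
  rw [two_mul] at hd hφ
  have happrox := approximatesLinearOn_id_of_norm_sub_le hr hd hφ
  have hsurj := happrox.surjOn_closedBall_of_nonlinearRightInverse
    ⟨id, 1, fun x => by simp, fun x => rfl⟩ hr.le Subset.rfl
  have hy : y ∈ closedBall (φ y) (r / 2) := by
    rw [mem_closedBall_iff_norm']
    exact hφ y (mem_ball_self (by positivity))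
  obtain ⟨x, hx, hxy⟩ := hsurj (closedBall_subset_closedBall (by norm_num; linarith) hy)
  have hxx := hφ x (closedBall_subset_ball (by linarith) hx)
  exact ⟨x, by rwa [mem_closedBall_iff_norm', ← hxy], hxy⟩

lemma exists_analyticOn_inverse_of_norm_sub_le [CompleteSpace E] {φ : E → E} {S : Set E} {r : ℝ}
    (hr : 0 < r) (han : AnalyticOnNhd ℂ φ (thickening (3 * r) S))
    (hφ : ∀ w ∈ thickening (3 * r) S, ‖φ w - w‖ ≤ r / 2) :
    ∃ ψ : E → E, AnalyticOn ℂ ψ S ∧ (∀ u ∈ S, φ (ψ u) = u) ∧ (∀ u ∈ S, ψ (φ u) = u) := by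
  rcases S.eq_empty_or_nonempty with rfl | ⟨y₀, -⟩
  · exact ⟨id, by simp [AnalyticOn], by simp, by simp⟩
  have : Nonempty E := ⟨y₀⟩
  set V : Set E := thickening r S
  have hSV : S ⊆ V := self_subset_thickening hr S
  have hV : thickening (2 * r) V ⊆ thickening (3 * r) S :=
    (thickening_thickening_subset _ _ _).trans (thickening_mono (by linarith) _)
  have hinj : InjOn φ V :=
    injOn_of_norm_sub_le hr (han.differentiableOn.mono hV) fun w hw => hφ w (hV hw)
  have hleft : LeftInvOn (Function.invFunOn φ V) φ V := hinj.leftInvOn_invFunOn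
  have hsurj : ∀ y ∈ S, ∃ x ∈ V, φ x = y := by
    intro y hy
    have hball : ball y (2 * r) ⊆ thickening (3 * r) S :=
      (ball_subset_thickening (hSV hy) _).trans hV
    obtain ⟨x, hx, hxy⟩ := exists_mem_closedBall_eq_of_norm_sub_le hr
      (han.differentiableOn.mono hball) fun w hw => hφ w (hball hw)
    exact ⟨x, mem_thickening_iff.2 ⟨y, hy, (mem_closedBall.1 hx).trans_lt (by linarith)⟩, hxy⟩
  refine ⟨Function.invFunOn φ V, fun y hy => ?_, fun y hy => Function.invFunOn_eq (hsurj y hy),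
    fun y hy => hleft (hSV hy)⟩
  obtain ⟨x, hx, rfl⟩ := hsurj y hy
  have hball : ball x r ⊆ thickening (3 * r) S :=
    (ball_subset_ball (by linarith)).trans ((ball_subset_thickening hx _).trans hV)
  exact (analyticAt_invFunOn (isOpen_thickening.mem_nhds hx) hinj
    (han x (hball (mem_ball_self hr)))
    (isInvertible_of_norm_sub_id_le (norm_fderiv_sub_id_le hr (han.differentiableOn.mono hball)
      fun w hw => hφ w (hball hw)))).analyticWithinAt

end NearIdentity

section Periodic

variable {F : Type*} [NormedAddCommGroup F] [NormedSpace ℝ F] {g : ℝ → F}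

lemma periodic_intervalIntegral_of_integral_eq_zero (hg : Continuous g)
    (hper : Function.Periodic g 1) (hmean : ∫ τ in (0 : ℝ)..1, g τ = 0) :
    Function.Periodic (fun θ => ∫ τ in (0 : ℝ)..θ, g τ) 1 := fun θ => by
  simpa only [zero_add, hmean, add_zero] using
    hper.intervalIntegral_add_eq_add 0 θ fun a b => hg.intervalIntegrable a b

lemma norm_intervalIntegral_le_half_of_integral_eq_zero (hg : Continuous g)
    (hper : Function.Periodic g 1) (hmean : ∫ τ in (0 : ℝ)..1, g τ = 0) {C : ℝ}
    (hC : ∀ τ, ‖g τ‖ ≤ C) (θ : ℝ) : ‖∫ τ in (0 : ℝ)..θ, g τ‖ ≤ C / 2 := by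
  have hintegrable : ∀ a b, IntervalIntegrable g volume a b := fun a b => hg.intervalIntegrable a b
  have hround : ∫ τ in (0 : ℝ)..round θ, g τ = 0 := by
    simpa only [zero_add, hmean, smul_zero, zsmul_eq_mul, mul_one] using
      hper.intervalIntegral_add_zsmul_eq (round θ) 0 hintegrable
  have hC₀ : 0 ≤ C := (norm_nonneg _).trans (hC 0)
  calc ‖∫ τ in (0 : ℝ)..θ, g τ‖ = ‖∫ τ in (round θ : ℝ)..θ, g τ‖ := by
        rw [← intervalIntegral.integral_add_adjacent_intervals (hintegrable 0 (round θ))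
          (hintegrable _ θ), hround, zero_add]
    _ ≤ C * |θ - round θ| := intervalIntegral.norm_integral_le_of_norm_le_const fun τ _ => hC τ
    _ ≤ C * (1 / 2) := by gcongr; exact abs_sub_round θ
    _ = C / 2 := by ring

end Periodic

section Average

variable {E : Type*} [NormedAddCommGroup E] [NormedSpace ℂ E] {g g' : ℝ → E → E} {u : E}

lemma thAvg_const [CompleteSpace E] (φ : E → E) : thAvg (fun _ => φ) = φ := by
  funext u
  simp [thAvg]

lemma norm_thAvg_le {C : ℝ} (hC : ∀ θ, ‖g θ u‖ ≤ C) : ‖thAvg g u‖ ≤ C := by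
  simpa [thAvg] using intervalIntegral.norm_integral_le_of_norm_le_const (a := (0 : ℝ)) (b := 1)
    (f := fun θ => g θ u) fun θ _ => hC θ

lemma norm_thAvg_sub_thAvg_le (hg : Continuous fun θ => g θ u) (hg' : Continuous fun θ => g' θ u)
    {d : ℝ} (hd : ∀ θ, ‖g θ u - g' θ u‖ ≤ d) : ‖thAvg g u - thAvg g' u‖ ≤ d := by
  rw [thAvg, thAvg, ← intervalIntegral.integral_sub (hg.intervalIntegrable _ _)
    (hg'.intervalIntegrable _ _)]
  exact norm_thAvg_le (g := fun θ v => g θ v - g' θ v) hd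

end Average

section NearIdentityFamilies

variable {E : Type*} [NormedAddCommGroup E] [NormedSpace ℂ E]

/-- Assumption (A) for the field `f`, with bound `M`, on an arbitrary set `O`. -/
structure PeriodicAnalyticField (f : ℝ → E → E) (M : ℝ) (O : Set E) : Prop where
  analyticOnNhd : ∀ θ, AnalyticOnNhd ℂ (f θ) O
  norm_le : ∀ θ, ∀ u ∈ O, ‖f θ u‖ ≤ M
  continuous : ∀ u ∈ O, Continuous fun θ => f θ u
  periodic : ∀ u ∈ O, Function.Periodic (fun θ => f θ u) 1

/-- A periodic change of variables `Φ` on an open set `O`, as produced by stroboscopic averaging: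
equal to the identity at `θ = 0` and within `r / 2` of it for all `θ`. The factor `1 / 2` is chosen
so that Cauchy's estimate on balls of radius `r` puts derivatives within `1 / 2` of the identity. -/
structure PeriodicNearIdentity (Φ : ℝ → E → E) (r : ℝ) (O : Set E) : Prop where
  pos : 0 < r
  isOpen : IsOpen O
  analyticFamilyOn : AnalyticFamilyOn Φ O
  norm_sub_le : ∀ θ, ∀ u ∈ O, ‖Φ θ u - u‖ ≤ r / 2
  periodic : ∀ u ∈ O, Function.Periodic (fun θ => Φ θ u) 1
  apply_zero : ∀ u ∈ O, Φ 0 u = u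
  contDiff : ∀ u ∈ O, ContDiff ℝ 1 fun θ => Φ θ u

variable {f Φ Φ' : ℝ → E → E} {M r d : ℝ} {O O' : Set E} {u : E}

namespace PeriodicAnalyticField

lemma mono (hf : PeriodicAnalyticField f M O) (h : O' ⊆ O) : PeriodicAnalyticField f M O' where
  analyticOnNhd θ := (hf.analyticOnNhd θ).mono h
  norm_le θ u hu := hf.norm_le θ u (h hu)
  continuous u hu := hf.continuous u (h hu)
  periodic u hu := hf.periodic u (h hu)

lemma nonneg (hf : PeriodicAnalyticField f M O) (hu : u ∈ O) : 0 ≤ M :=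
  (norm_nonneg _).trans (hf.norm_le 0 u hu)

lemma norm_sub_le (hf : PeriodicAnalyticField f M O) (hr : 0 < r) (hu : ball u r ⊆ O) {x y : E}
    (hx : ‖x - u‖ ≤ r / 2) (hy : ‖y - u‖ ≤ r / 2) (θ : ℝ) :
    ‖f θ y - f θ x‖ ≤ 2 * M / r * ‖y - x‖ := by
  have hball : ball u (r / 2 + r / 2) ⊆ O := by rwa [add_halves]
  calc ‖f θ y - f θ x‖ ≤ M / (r / 2) * ‖y - x‖ :=
        norm_sub_le_of_forall_mem_ball_norm_le (half_pos hr)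
          ((hf.analyticOnNhd θ).differentiableOn.mono hball) (fun w hw => hf.norm_le θ w (hball hw))
          (mem_closedBall_iff_norm.2 hx) (mem_closedBall_iff_norm.2 hy)
    _ = 2 * M / r * ‖y - x‖ := by field_simp

end PeriodicAnalyticField

namespace PeriodicNearIdentity

lemma mono (hΦ : PeriodicNearIdentity Φ r O) (hO' : IsOpen O') (h : O' ⊆ O) :
    PeriodicNearIdentity Φ r O' where
  pos := hΦ.pos
  isOpen := hO'
  analyticFamilyOn := hΦ.analyticFamilyOn.mono h
  norm_sub_le θ u hu := hΦ.norm_sub_le θ u (h hu)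
  periodic u hu := hΦ.periodic u (h hu)
  apply_zero u hu := hΦ.apply_zero u (h hu)
  contDiff u hu := hΦ.contDiff u (h hu)

lemma mem_of_ball_subset (hΦ : PeriodicNearIdentity Φ r O) (hu : ball u r ⊆ O) : u ∈ O :=
  hu (mem_ball_self hΦ.pos)

lemma apply_mem (hΦ : PeriodicNearIdentity Φ r O) (hu : ball u r ⊆ O) (θ : ℝ) : Φ θ u ∈ O :=
  hu <| mem_ball_iff_norm.2 <|
    (hΦ.norm_sub_le θ u (hΦ.mem_of_ball_subset hu)).trans_lt (half_lt_self hΦ.pos)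

lemma analyticOnNhd (hΦ : PeriodicNearIdentity Φ r O) (θ : ℝ) : AnalyticOnNhd ℂ (Φ θ) O :=
  hΦ.analyticFamilyOn.analyticOnNhd hΦ.isOpen θ

lemma continuous (hΦ : PeriodicNearIdentity Φ r O) (hu : u ∈ O) : Continuous fun θ => Φ θ u :=
  hΦ.analyticFamilyOn.continuous hu

lemma norm_fderiv_apply_le (hΦ : PeriodicNearIdentity Φ r O) (hu : ball u r ⊆ O) (θ : ℝ) (v : E) :
    ‖fderiv ℂ (Φ θ) u v‖ ≤ 3 / 2 * ‖v‖ := by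
  have hid : ‖fderiv ℂ (Φ θ) u - ContinuousLinearMap.id ℂ E‖ ≤ 1 / 2 :=
    norm_fderiv_sub_id_le hΦ.pos ((hΦ.analyticOnNhd θ).differentiableOn.mono hu)
      fun w hw => hΦ.norm_sub_le θ w (hu hw)
  have hsub : ‖fderiv ℂ (Φ θ) u v - v‖ ≤ 1 / 2 * ‖v‖ := ContinuousLinearMap.le_of_opNorm_le _ hid v
  linarith [norm_le_norm_add_norm_sub' (fderiv ℂ (Φ θ) u v) v]

lemma periodic_fderiv_apply (hΦ : PeriodicNearIdentity Φ r O) (hu : u ∈ O) (v : E) :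
    Function.Periodic (fun θ => fderiv ℂ (Φ θ) u v) 1 := fun θ => by
  have heq : Φ (θ + 1) =ᶠ[𝓝 u] Φ θ :=
    (hΦ.isOpen.eventually_mem hu).mono fun w hw => hΦ.periodic w hw θ
  simp only [heq.fderiv_eq]

lemma continuous_comp (hΦ : PeriodicNearIdentity Φ r O) (hf : PeriodicAnalyticField f M O)
    (hu : ball u r ⊆ O) : Continuous fun θ => f θ (Φ θ u) := by
  have huO := hΦ.mem_of_ball_subset hu
  refine continuous_iff_continuousAt.2 fun θ₀ => ?_
  have hdiff : Tendsto (fun θ => f θ (Φ θ u) - f θ (Φ θ₀ u)) (𝓝 θ₀) (𝓝 0) := by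
    refine squeeze_zero_norm (fun θ => hf.norm_sub_le hΦ.pos hu (hΦ.norm_sub_le θ₀ u huO)
      (hΦ.norm_sub_le θ u huO) θ) ?_
    have hcont : Continuous fun θ => 2 * M / r * ‖Φ θ u - Φ θ₀ u‖ :=
      continuous_const.mul ((hΦ.continuous huO).sub continuous_const).norm
    simpa using hcont.tendsto θ₀
  simpa [ContinuousAt] using hdiff.add ((hf.continuous _ (hΦ.apply_mem hu θ₀)).tendsto θ₀)

lemma periodic_comp (hΦ : PeriodicNearIdentity Φ r O) (hf : PeriodicAnalyticField f M O)
    (hu : ball u r ⊆ O) : Function.Periodic (fun θ => f θ (Φ θ u)) 1 := fun θ => by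
  have hΦθ : Φ (θ + 1) u = Φ θ u := hΦ.periodic u (hΦ.mem_of_ball_subset hu) θ
  simpa only [hΦθ] using hf.periodic _ (hΦ.apply_mem hu θ) θ

lemma analyticOnNhd_thAvg (hΦ : PeriodicNearIdentity Φ r O) : AnalyticOnNhd ℂ (thAvg Φ) O :=
  hΦ.analyticFamilyOn.analyticOnNhd_intervalIntegral hΦ.isOpen 0 1

lemma norm_comp_sub_comp_le (hΦ : PeriodicNearIdentity Φ r O) (hΦ' : PeriodicNearIdentity Φ' r O)
    (hf : PeriodicAnalyticField f M O) (hu : ball u r ⊆ O)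
    (hd : ∀ θ, ∀ w ∈ ball u r, ‖Φ' θ w - Φ θ w‖ ≤ d) (θ : ℝ) :
    ‖f θ (Φ' θ u) - f θ (Φ θ u)‖ ≤ 2 * M * d / r := by
  have huO := hΦ.mem_of_ball_subset hu
  have hr := hΦ.pos
  have hM := hf.nonneg huO
  calc ‖f θ (Φ' θ u) - f θ (Φ θ u)‖ ≤ 2 * M / r * ‖Φ' θ u - Φ θ u‖ :=
        hf.norm_sub_le hr hu (hΦ.norm_sub_le θ u huO) (hΦ'.norm_sub_le θ u huO) θ
    _ ≤ 2 * M / r * d := by gcongr; exact hd θ u (mem_ball_self hr)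
    _ = 2 * M * d / r := by ring

lemma norm_fderiv_thAvg_sub_fderiv_thAvg_le (hΦ : PeriodicNearIdentity Φ r O)
    (hΦ' : PeriodicNearIdentity Φ' r O) (hu : ball u r ⊆ O)
    (hd : ∀ θ, ∀ w ∈ ball u r, ‖Φ' θ w - Φ θ w‖ ≤ d) :
    ‖fderiv ℂ (thAvg Φ') u - fderiv ℂ (thAvg Φ) u‖ ≤ d / r :=
  norm_fderiv_sub_fderiv_le hΦ.pos (hΦ'.analyticOnNhd_thAvg.differentiableOn.mono hu)
    (hΦ.analyticOnNhd_thAvg.differentiableOn.mono hu) fun w hw =>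
      norm_thAvg_sub_thAvg_le (hΦ'.continuous (hu hw)) (hΦ.continuous (hu hw)) fun θ => hd θ w hw

variable [CompleteSpace E]

lemma analyticFamilyOn_comp (hΦ : PeriodicNearIdentity Φ r O) (hf : PeriodicAnalyticField f M O)
    (hO' : IsOpen O') (hsub : thickening r O' ⊆ O) :
    AnalyticFamilyOn (fun θ v => f θ (Φ θ v)) O' := by
  have hball : ∀ w ∈ O', ball w r ⊆ O := fun w hw => (ball_subset_thickening hw r).trans hsub
  refine analyticFamilyOn_of_norm_le (B := fun _ => M) hO' (fun θ w hw => ?_)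
    (fun w hw => hΦ.continuous_comp hf (hball w hw)) continuousOn_const
    fun θ w hw => hf.norm_le θ _ (hΦ.apply_mem (hball w hw) θ)
  exact (hf.analyticOnNhd θ _ (hΦ.apply_mem (hball w hw) θ)).comp
    (hΦ.analyticOnNhd θ w (hΦ.mem_of_ball_subset (hball w hw)))

lemma norm_thAvg_sub_le (hΦ : PeriodicNearIdentity Φ r O) (hu : u ∈ O) :
    ‖thAvg Φ u - u‖ ≤ r / 2 := by
  simpa only [thAvg_const] using norm_thAvg_sub_thAvg_le (g' := fun _ v => v) (hΦ.continuous hu)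
    continuous_const fun θ => hΦ.norm_sub_le θ u hu

lemma norm_fderiv_thAvg_sub_id_le (hΦ : PeriodicNearIdentity Φ r O) (hu : ball u r ⊆ O) :
    ‖fderiv ℂ (thAvg Φ) u - ContinuousLinearMap.id ℂ E‖ ≤ 1 / 2 :=
  norm_fderiv_sub_id_le hΦ.pos (hΦ.analyticOnNhd_thAvg.differentiableOn.mono hu)
    fun _ hw => hΦ.norm_thAvg_sub_le (hu hw)

lemma isInvertible_fderiv_thAvg (hΦ : PeriodicNearIdentity Φ r O) (hu : ball u r ⊆ O) :
    (fderiv ℂ (thAvg Φ) u).IsInvertible :=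
  isInvertible_of_norm_sub_id_le (hΦ.norm_fderiv_thAvg_sub_id_le hu)

lemma norm_le_two_mul_norm_fderiv_thAvg (hΦ : PeriodicNearIdentity Φ r O) (hu : ball u r ⊆ O)
    (v : E) : ‖v‖ ≤ 2 * ‖fderiv ℂ (thAvg Φ) u v‖ :=
  norm_le_two_mul_norm_apply (hΦ.norm_fderiv_thAvg_sub_id_le hu) v

lemma fderiv_thAvg_aveField (hΦ : PeriodicNearIdentity Φ r O) (hu : ball u r ⊆ O)
    (f : ℝ → E → E) :
    fderiv ℂ (thAvg Φ) u (aveField f Φ u) = thAvg (fun θ v => f θ (Φ θ v)) u :=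
  (hΦ.isInvertible_fderiv_thAvg hu).self_apply_inverse _

lemma norm_aveField_le (hΦ : PeriodicNearIdentity Φ r O) (hf : PeriodicAnalyticField f M O)
    (hu : ball u r ⊆ O) : ‖aveField f Φ u‖ ≤ 2 * M := by
  refine (hΦ.norm_le_two_mul_norm_fderiv_thAvg hu _).trans ?_
  rw [hΦ.fderiv_thAvg_aveField hu]
  gcongr
  exact norm_thAvg_le fun θ => hf.norm_le θ _ (hΦ.apply_mem hu θ)

lemma analyticOnNhd_aveField (hΦ : PeriodicNearIdentity Φ r O)
    (hf : PeriodicAnalyticField f M O) (hO' : IsOpen O') (hsub : thickening r O' ⊆ O) :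
    AnalyticOnNhd ℂ (aveField f Φ) O' := fun w hw => by
  have hball : ball w r ⊆ O := (ball_subset_thickening hw r).trans hsub
  have hinv : AnalyticAt ℂ ContinuousLinearMap.inverse (fderiv ℂ (thAvg Φ) w) :=
    ((hΦ.isInvertible_fderiv_thAvg hball).contDiffAt_map_inverse (n := ⊤)).analyticAt
  have hfderiv : AnalyticAt ℂ (fderiv ℂ (thAvg Φ)) w :=
    (hΦ.analyticOnNhd_thAvg w (hΦ.mem_of_ball_subset hball)).fderiv
  have havg : AnalyticAt ℂ (thAvg fun θ v => f θ (Φ θ v)) w :=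
    (hΦ.analyticFamilyOn_comp hf hO' hsub).analyticOnNhd_intervalIntegral hO' 0 1 w hw
  exact ((ContinuousLinearMap.id ℂ (E →L[ℂ] E)).analyticAt_bilinear _).comp₂
    (hinv.comp hfderiv) havg

end PeriodicNearIdentity

/-- The `ε⁻¹`-multiple of the `θ`-derivative of the next iterate:
`f_τ(Φ_τ(u)) − ∂_uΦ_τ(u) F(u)`, where `F` is the averaged field of `Φ`. -/
noncomputable def stroboscopicIntegrand (f Φ : ℝ → E → E) (τ : ℝ) (u : E) : E :=
  f τ (Φ τ u) - fderiv ℂ (Φ τ) u (aveField f Φ u)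

/-- One step of the stroboscopic averaging iteration, applied to an arbitrary map `Φ`. -/
noncomputable def stroboscopicStep (f : ℝ → E → E) (ε : ℝ) (Φ : ℝ → E → E) (θ : ℝ) (u : E) : E :=
  u + ε • ∫ τ in (0 : ℝ)..θ, stroboscopicIntegrand f Φ τ u

/-- The defect of an arbitrary map `Φ`; `defect f ε k` is the defect of `PhiIter f ε k`. -/
noncomputable def stroboscopicDefect (f : ℝ → E → E) (ε : ℝ) (Φ : ℝ → E → E) (θ : ℝ) (u : E) : E :=
  (1 / ε) • deriv (fun τ => Φ τ u) θ + fderiv ℂ (Φ θ) u (aveField f Φ u) - f θ (Φ θ u)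

lemma stroboscopicDefect_eq_smul_deriv_sub (f : ℝ → E → E) (ε : ℝ) (Φ : ℝ → E → E) (θ : ℝ)
    (u : E) : stroboscopicDefect f ε Φ θ u =
      (1 / ε) • deriv (fun τ => Φ τ u) θ - stroboscopicIntegrand f Φ θ u := by
  rw [stroboscopicDefect, stroboscopicIntegrand]
  abel

namespace PeriodicNearIdentity

lemma periodic_stroboscopicIntegrand (hΦ : PeriodicNearIdentity Φ r O)
    (hf : PeriodicAnalyticField f M O) (hu : ball u r ⊆ O) :
    Function.Periodic (fun τ => stroboscopicIntegrand f Φ τ u) 1 :=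
  (hΦ.periodic_comp hf hu).sub (hΦ.periodic_fderiv_apply (hΦ.mem_of_ball_subset hu) _)

lemma periodic_stroboscopicDefect (hΦ : PeriodicNearIdentity Φ r O)
    (hf : PeriodicAnalyticField f M O) (hu : ball u r ⊆ O) (ε : ℝ) :
    Function.Periodic (fun τ => stroboscopicDefect f ε Φ τ u) 1 := fun τ => by
  have hderiv : deriv (fun τ => Φ τ u) (τ + 1) = deriv (fun τ => Φ τ u) τ := by
    rw [← deriv_comp_add_const]
    exact congrArg (deriv · τ) (funext (hΦ.periodic u (hΦ.mem_of_ball_subset hu)))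
  have hintegrand : stroboscopicIntegrand f Φ (τ + 1) u = stroboscopicIntegrand f Φ τ u :=
    hΦ.periodic_stroboscopicIntegrand hf hu τ
  simp only [stroboscopicDefect_eq_smul_deriv_sub, hderiv, hintegrand]

variable [CompleteSpace E] {ε D : ℝ}

lemma continuous_fderiv_apply (hΦ : PeriodicNearIdentity Φ r O) (hu : u ∈ O) (v : E) :
    Continuous fun θ => fderiv ℂ (Φ θ) u v :=
  (hΦ.analyticFamilyOn.fderiv_apply hΦ.isOpen analyticOnNhd_const).continuous hu

lemma continuous_stroboscopicIntegrand (hΦ : PeriodicNearIdentity Φ r O)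
    (hf : PeriodicAnalyticField f M O) (hu : ball u r ⊆ O) :
    Continuous fun τ => stroboscopicIntegrand f Φ τ u :=
  (hΦ.continuous_comp hf hu).sub (hΦ.continuous_fderiv_apply (hΦ.mem_of_ball_subset hu) _)

lemma norm_stroboscopicIntegrand_le (hΦ : PeriodicNearIdentity Φ r O)
    (hf : PeriodicAnalyticField f M O) (hu : ball u r ⊆ O) (τ : ℝ) :
    ‖stroboscopicIntegrand f Φ τ u‖ ≤ 4 * M := by
  have hcomp : ‖f τ (Φ τ u)‖ ≤ M := hf.norm_le τ _ (hΦ.apply_mem hu τ)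
  have hderiv := hΦ.norm_fderiv_apply_le hu τ (aveField f Φ u)
  have hF := hΦ.norm_aveField_le hf hu
  exact (_root_.norm_sub_le _ _).trans (by linarith)

lemma integral_stroboscopicIntegrand_eq_zero (hΦ : PeriodicNearIdentity Φ r O)
    (hf : PeriodicAnalyticField f M O) (hu : ball u r ⊆ O) :
    ∫ τ in (0 : ℝ)..1, stroboscopicIntegrand f Φ τ u = 0 := by
  have huO := hΦ.mem_of_ball_subset hu
  unfold stroboscopicIntegrand
  rw [intervalIntegral.integral_sub ((hΦ.continuous_comp hf hu).intervalIntegrable _ _)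
    ((hΦ.continuous_fderiv_apply huO _).intervalIntegrable _ _),
    ← hΦ.analyticFamilyOn.fderiv_intervalIntegral_apply hΦ.isOpen 0 1 huO, sub_eq_zero]
  exact (hΦ.fderiv_thAvg_aveField hu f).symm

lemma analyticFamilyOn_stroboscopicIntegrand (hΦ : PeriodicNearIdentity Φ r O)
    (hf : PeriodicAnalyticField f M O) (hO' : IsOpen O') (hsub : thickening r O' ⊆ O) :
    AnalyticFamilyOn (stroboscopicIntegrand f Φ) O' :=
  (hΦ.analyticFamilyOn_comp hf hO' hsub).sub <|
    (hΦ.analyticFamilyOn.mono ((self_subset_thickening hΦ.pos O').trans hsub)).fderiv_apply hO'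
      (hΦ.analyticOnNhd_aveField hf hO' hsub)

lemma hasDerivAt_stroboscopicStep (hΦ : PeriodicNearIdentity Φ r O)
    (hf : PeriodicAnalyticField f M O) (hu : ball u r ⊆ O) (ε θ : ℝ) :
    HasDerivAt (fun θ => stroboscopicStep f ε Φ θ u) (ε • stroboscopicIntegrand f Φ θ u) θ :=
  (((hΦ.continuous_stroboscopicIntegrand hf hu).integral_hasStrictDerivAt 0 θ).hasDerivAt.const_smul
    ε).const_add u

lemma contDiff_stroboscopicStep (hΦ : PeriodicNearIdentity Φ r O)
    (hf : PeriodicAnalyticField f M O) (hu : ball u r ⊆ O) (ε : ℝ) :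
    ContDiff ℝ 1 fun θ => stroboscopicStep f ε Φ θ u := by
  have hderiv := hΦ.hasDerivAt_stroboscopicStep hf hu ε
  refine contDiff_one_iff_deriv.2 ⟨fun θ => (hderiv θ).differentiableAt, ?_⟩
  rw [funext fun θ => (hderiv θ).deriv]
  exact (hΦ.continuous_stroboscopicIntegrand hf hu).const_smul ε

lemma norm_stroboscopicStep_sub_le (hΦ : PeriodicNearIdentity Φ r O)
    (hf : PeriodicAnalyticField f M O) (hu : ball u r ⊆ O) (hε : 0 ≤ ε) (hεM : 4 * (ε * M) ≤ r)
    (θ : ℝ) : ‖stroboscopicStep f ε Φ θ u - u‖ ≤ r / 2 := by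
  have hprimitive := norm_intervalIntegral_le_half_of_integral_eq_zero
    (hΦ.continuous_stroboscopicIntegrand hf hu) (hΦ.periodic_stroboscopicIntegrand hf hu)
    (hΦ.integral_stroboscopicIntegrand_eq_zero hf hu) (hΦ.norm_stroboscopicIntegrand_le hf hu) θ
  calc ‖stroboscopicStep f ε Φ θ u - u‖
      = ε * ‖∫ τ in (0 : ℝ)..θ, stroboscopicIntegrand f Φ τ u‖ := by
        rw [stroboscopicStep, add_sub_cancel_left, norm_smul, Real.norm_of_nonneg hε]
    _ ≤ ε * (4 * M / 2) := by gcongr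
    _ ≤ r / 2 := by linarith

lemma analyticOnNhd_stroboscopicStep (hΦ : PeriodicNearIdentity Φ r O)
    (hf : PeriodicAnalyticField f M O) (hO' : IsOpen O') (hsub : thickening r O' ⊆ O) (ε θ : ℝ) :
    AnalyticOnNhd ℂ (stroboscopicStep f ε Φ θ) O' := by
  have hfamily := hΦ.analyticFamilyOn_stroboscopicIntegrand hf hO' hsub
  exact analyticOnNhd_id.add ((hfamily.analyticOnNhd_intervalIntegral hO' 0 θ).const_smul (c := ε))

lemma step (hΦ : PeriodicNearIdentity Φ r O) (hf : PeriodicAnalyticField f M O)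
    (hO' : IsOpen O') (hsub : thickening r O' ⊆ O) (hε : 0 ≤ ε) (hεM : 4 * (ε * M) ≤ r) :
    PeriodicNearIdentity (stroboscopicStep f ε Φ) r O' := by
  have hball : ∀ w ∈ O', ball w r ⊆ O := fun w hw => (ball_subset_thickening hw r).trans hsub
  have hclose : ∀ θ, ∀ w ∈ O', ‖stroboscopicStep f ε Φ θ w - w‖ ≤ r / 2 := fun θ w hw =>
    hΦ.norm_stroboscopicStep_sub_le hf (hball w hw) hε hεM θ
  have hC1 : ∀ w ∈ O', ContDiff ℝ 1 fun θ => stroboscopicStep f ε Φ θ w := fun w hw =>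
    hΦ.contDiff_stroboscopicStep hf (hball w hw) ε
  have hfamily : AnalyticFamilyOn (stroboscopicStep f ε Φ) O' :=
    analyticFamilyOn_of_norm_le (B := fun w => ‖w‖ + r / 2) hO'
      (hΦ.analyticOnNhd_stroboscopicStep hf hO' hsub ε) (fun w hw => (hC1 w hw).continuous)
      (by fun_prop) fun θ w hw => (norm_le_norm_add_norm_sub' _ w).trans (by grw [hclose θ w hw])
  refine ⟨hΦ.pos, hO', hfamily, hclose, fun w hw θ => ?_, fun w _ => by simp [stroboscopicStep],
    hC1⟩
  have hper := periodic_intervalIntegral_of_integral_eq_zero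
    (hΦ.continuous_stroboscopicIntegrand hf (hball w hw))
    (hΦ.periodic_stroboscopicIntegrand hf (hball w hw))
    (hΦ.integral_stroboscopicIntegrand_eq_zero hf (hball w hw)) θ
  simp only at hper
  simp only [stroboscopicStep, hper]

lemma continuous_stroboscopicDefect (hΦ : PeriodicNearIdentity Φ r O)
    (hf : PeriodicAnalyticField f M O) (hu : ball u r ⊆ O) (ε : ℝ) :
    Continuous fun τ => stroboscopicDefect f ε Φ τ u := by
  simp only [stroboscopicDefect_eq_smul_deriv_sub]
  have hderiv := (hΦ.contDiff u (hΦ.mem_of_ball_subset hu)).continuous_deriv le_rfl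
  exact (hderiv.const_smul (1 / ε)).sub (hΦ.continuous_stroboscopicIntegrand hf hu)

lemma integral_stroboscopicDefect (hΦ : PeriodicNearIdentity Φ r O)
    (hf : PeriodicAnalyticField f M O) (hu : ball u r ⊆ O) (ε θ : ℝ) :
    ∫ τ in (0 : ℝ)..θ, stroboscopicDefect f ε Φ τ u =
      (1 / ε) • (Φ θ u - u) - ∫ τ in (0 : ℝ)..θ, stroboscopicIntegrand f Φ τ u := by
  have huO := hΦ.mem_of_ball_subset hu
  have hdiff := (hΦ.contDiff u huO).differentiable one_ne_zero
  have hderiv : Continuous fun τ => deriv (fun τ => Φ τ u) τ :=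
    (hΦ.contDiff u huO).continuous_deriv le_rfl
  have hsmul : Continuous fun τ => (1 / ε) • deriv (fun τ => Φ τ u) τ := hderiv.const_smul _
  simp only [stroboscopicDefect_eq_smul_deriv_sub]
  rw [intervalIntegral.integral_sub (hsmul.intervalIntegrable _ _)
    ((hΦ.continuous_stroboscopicIntegrand hf hu).intervalIntegrable _ _),
    intervalIntegral.integral_smul, intervalIntegral.integral_deriv_eq_sub (fun τ _ => hdiff τ)
      (hderiv.intervalIntegrable _ _), hΦ.apply_zero u huO]

lemma integral_stroboscopicDefect_eq_zero (hΦ : PeriodicNearIdentity Φ r O)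
    (hf : PeriodicAnalyticField f M O) (hu : ball u r ⊆ O) (ε : ℝ) :
    ∫ τ in (0 : ℝ)..1, stroboscopicDefect f ε Φ τ u = 0 := by
  have huO := hΦ.mem_of_ball_subset hu
  have hΦ_one : Φ 1 u = u := by
    simpa only [zero_add, hΦ.apply_zero u huO] using hΦ.periodic u huO 0
  rw [hΦ.integral_stroboscopicDefect hf hu, hΦ.integral_stroboscopicIntegrand_eq_zero hf hu,
    hΦ_one, sub_self, smul_zero, sub_zero]

lemma stroboscopicStep_sub_eq (hΦ : PeriodicNearIdentity Φ r O)
    (hf : PeriodicAnalyticField f M O) (hu : ball u r ⊆ O) (hε : ε ≠ 0) (θ : ℝ) :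
    stroboscopicStep f ε Φ θ u - Φ θ u =
      -(ε • ∫ τ in (0 : ℝ)..θ, stroboscopicDefect f ε Φ τ u) := by
  rw [hΦ.integral_stroboscopicDefect hf hu, smul_sub, smul_smul, mul_one_div_cancel hε, one_smul,
    stroboscopicStep]
  abel

lemma norm_stroboscopicStep_sub_apply_le (hΦ : PeriodicNearIdentity Φ r O)
    (hf : PeriodicAnalyticField f M O) (hu : ball u r ⊆ O) (hε : 0 < ε)
    (hD : ∀ θ, ‖stroboscopicDefect f ε Φ θ u‖ ≤ D) (θ : ℝ) :
    ‖stroboscopicStep f ε Φ θ u - Φ θ u‖ ≤ ε * D / 2 := by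
  have hprimitive := norm_intervalIntegral_le_half_of_integral_eq_zero
    (hΦ.continuous_stroboscopicDefect hf hu ε) (hΦ.periodic_stroboscopicDefect hf hu ε)
    (hΦ.integral_stroboscopicDefect_eq_zero hf hu ε) hD θ
  rw [hΦ.stroboscopicStep_sub_eq hf hu hε.ne', norm_neg, norm_smul, Real.norm_of_nonneg hε.le,
    mul_div_assoc]
  gcongr

lemma norm_aveField_sub_aveField_le (hΦ : PeriodicNearIdentity Φ r O)
    (hΦ' : PeriodicNearIdentity Φ' r O) (hf : PeriodicAnalyticField f M O) (hu : ball u r ⊆ O)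
    (hd : ∀ θ, ∀ w ∈ ball u r, ‖Φ' θ w - Φ θ w‖ ≤ d) :
    ‖aveField f Φ' u - aveField f Φ u‖ ≤ 8 * M * d / r := by
  set A := fderiv ℂ (thAvg Φ) u
  set A' := fderiv ℂ (thAvg Φ') u
  set F := aveField f Φ u
  set F' := aveField f Φ' u
  have hcomp : ‖thAvg (fun θ v => f θ (Φ' θ v)) u - thAvg (fun θ v => f θ (Φ θ v)) u‖
      ≤ 2 * M * d / r :=
    norm_thAvg_sub_thAvg_le (hΦ'.continuous_comp hf hu) (hΦ.continuous_comp hf hu)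
      (hΦ.norm_comp_sub_comp_le hΦ' hf hu hd)
  have hderiv : ‖(A' - A) F'‖ ≤ d / r * (2 * M) :=
    (A' - A).le_of_opNorm_le_of_le (hΦ.norm_fderiv_thAvg_sub_fderiv_thAvg_le hΦ' hu hd)
      (hΦ'.norm_aveField_le hf hu)
  have hA : A (F' - F) = (A' F' - A F) - (A' - A) F' := by
    rw [map_sub, _root_.sub_apply]
    abel
  rw [hΦ.fderiv_thAvg_aveField hu f, hΦ'.fderiv_thAvg_aveField hu f] at hA
  calc ‖F' - F‖ ≤ 2 * ‖A (F' - F)‖ := hΦ.norm_le_two_mul_norm_fderiv_thAvg hu _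
    _ ≤ 2 * (2 * M * d / r + d / r * (2 * M)) := by
        rw [hA]
        gcongr
        exact (_root_.norm_sub_le _ _).trans (add_le_add hcomp hderiv)
    _ = 8 * M * d / r := by ring

lemma norm_stroboscopicIntegrand_sub_le (hΦ : PeriodicNearIdentity Φ r O)
    (hΦ' : PeriodicNearIdentity Φ' r O) (hf : PeriodicAnalyticField f M O) (hu : ball u r ⊆ O)
    (hd : ∀ θ, ∀ w ∈ ball u r, ‖Φ' θ w - Φ θ w‖ ≤ d) (θ : ℝ) :
    ‖stroboscopicIntegrand f Φ θ u - stroboscopicIntegrand f Φ' θ u‖ ≤ 16 * M * d / r := by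
  set P := fderiv ℂ (Φ θ) u
  set P' := fderiv ℂ (Φ' θ) u
  set F := aveField f Φ u
  set F' := aveField f Φ' u
  have hP : ‖P' - P‖ ≤ d / r :=
    norm_fderiv_sub_fderiv_le hΦ.pos ((hΦ'.analyticOnNhd θ).differentiableOn.mono hu)
      ((hΦ.analyticOnNhd θ).differentiableOn.mono hu) (hd θ)
  have hderiv : ‖(P' - P) F'‖ ≤ d / r * (2 * M) :=
    (P' - P).le_of_opNorm_le_of_le hP (hΦ'.norm_aveField_le hf hu)
  have hfield : ‖P (F' - F)‖ ≤ 3 / 2 * (8 * M * d / r) :=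
    (hΦ.norm_fderiv_apply_le hu θ _).trans
      (by gcongr; exact hΦ.norm_aveField_sub_aveField_le hΦ' hf hu hd)
  have hsplit : stroboscopicIntegrand f Φ θ u - stroboscopicIntegrand f Φ' θ u =
      -(f θ (Φ' θ u) - f θ (Φ θ u)) + (P' - P) F' + P (F' - F) := by
    rw [map_sub, _root_.sub_apply, stroboscopicIntegrand, stroboscopicIntegrand]
    abel
  calc _ ≤ ‖f θ (Φ' θ u) - f θ (Φ θ u)‖ + ‖(P' - P) F'‖ + ‖P (F' - F)‖ := by
        rw [hsplit, ← norm_neg (f θ (Φ' θ u) - f θ (Φ θ u))]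
        exact norm_add₃_le
    _ ≤ 2 * M * d / r + d / r * (2 * M) + 3 / 2 * (8 * M * d / r) :=
        add_le_add_three (hΦ.norm_comp_sub_comp_le hΦ' hf hu hd θ) hderiv hfield
    _ = 16 * M * d / r := by ring

lemma norm_stroboscopicDefect_step_le (hΦ : PeriodicNearIdentity Φ r O)
    (hf : PeriodicAnalyticField f M O) (hO' : IsOpen O') (hsub : thickening r O' ⊆ O)
    (hε : 0 < ε) (hεM : 4 * (ε * M) ≤ r)
    (hD : ∀ θ, ∀ w ∈ O', ‖stroboscopicDefect f ε Φ θ w‖ ≤ D) (hu : ball u r ⊆ O') (θ : ℝ) :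
    ‖stroboscopicDefect f ε (stroboscopicStep f ε Φ) θ u‖ ≤ 8 * M * ε / r * D := by
  have hball : ∀ w ∈ O', ball w r ⊆ O := fun w hw => (ball_subset_thickening hw r).trans hsub
  have hO'O : O' ⊆ O := (self_subset_thickening hΦ.pos O').trans hsub
  have hΦ' := hΦ.step hf hO' hsub hε.le hεM
  have hderiv := hΦ.hasDerivAt_stroboscopicStep hf (hball u (hΦ'.mem_of_ball_subset hu)) ε θ
  have hdist : ∀ θ, ∀ w ∈ ball u r, ‖stroboscopicStep f ε Φ θ w - Φ θ w‖ ≤ ε * D / 2 :=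
    fun θ w hw => hΦ.norm_stroboscopicStep_sub_apply_le hf (hball w (hu hw)) hε
      (fun θ => hD θ w (hu hw)) θ
  calc ‖stroboscopicDefect f ε (stroboscopicStep f ε Φ) θ u‖
      = ‖stroboscopicIntegrand f Φ θ u
          - stroboscopicIntegrand f (stroboscopicStep f ε Φ) θ u‖ := by
        rw [stroboscopicDefect_eq_smul_deriv_sub, hderiv.deriv, smul_smul,
          one_div_mul_cancel hε.ne', one_smul]
    _ ≤ 16 * M * (ε * D / 2) / r :=
        (hΦ.mono hO' hO'O).norm_stroboscopicIntegrand_sub_le hΦ' (hf.mono hO'O) hu hdist θ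
    _ = 8 * M * ε / r * D := by ring

end PeriodicNearIdentity

section Iteration

variable [CompleteSpace E]

lemma periodicNearIdentity_id (hr : 0 < r) (hO : IsOpen O) :
    PeriodicNearIdentity (fun _ u => u : ℝ → E → E) r O where
  pos := hr
  isOpen := hO
  analyticFamilyOn := analyticFamilyOn_of_norm_le (B := fun w => ‖w‖) hO
    (fun _ => analyticOnNhd_id) (fun _ _ => continuous_const) continuous_norm.continuousOn
    fun _ _ _ => le_rfl
  norm_sub_le _ u _ := by rw [sub_self, norm_zero]; positivity
  periodic _ _ _ := rfl
  apply_zero _ _ := rfl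
  contDiff _ _ := contDiff_const

lemma aveField_id (f : ℝ → E → E) : aveField f (fun _ u => u) = thAvg f := by
  funext u
  simp only [aveField, thAvg_const, fderiv_fun_id, ContinuousLinearMap.inverse_id,
    ContinuousLinearMap.id_apply]

lemma norm_stroboscopicDefect_id_le (hf : PeriodicAnalyticField f M O) (hu : u ∈ O) (ε θ : ℝ) :
    ‖stroboscopicDefect f ε (fun _ u => u) θ u‖ ≤ 2 * M := by
  have hbound : ∀ θ, ‖f θ u‖ ≤ M := fun θ => hf.norm_le θ u hu
  have hdefect : stroboscopicDefect f ε (fun _ u => u) θ u = thAvg f u - f θ u := by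
    simp [stroboscopicDefect, aveField_id, fderiv_fun_id]
  rw [hdefect, two_mul]
  exact (norm_sub_le _ _).trans (add_le_add (norm_thAvg_le hbound) (hbound θ))

variable {S : Set E} {ε ρ : ℝ}

lemma periodicNearIdentity_PhiIter (hr : 0 < r) (hε : 0 ≤ ε) (hεM : 4 * (ε * M) ≤ r) (k : ℕ)
    (hf : PeriodicAnalyticField f M (thickening (ρ + k * r) S)) :
    PeriodicNearIdentity (PhiIter f ε k) r (thickening ρ S) := by
  induction k generalizing ρ with
  | zero => exact periodicNearIdentity_id hr isOpen_thickening
  | succ k ih =>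
    replace hf : PeriodicAnalyticField f M (thickening (r + ρ + k * r) S) :=
      hf.mono (thickening_mono (by push_cast; linarith) S)
    exact (ih hf).step (hf.mono (thickening_mono (le_add_of_nonneg_right (by positivity)) S))
      isOpen_thickening (thickening_thickening_subset r ρ S) hε hεM

lemma norm_defect_le (hr : 0 < r) (hε : 0 < ε) (hεM : 4 * (ε * M) ≤ r) (k : ℕ)
    (hf : PeriodicAnalyticField f M (thickening (ρ + k * r) S)) (hu : ball u r ⊆ thickening ρ S)
    (θ : ℝ) : ‖defect f ε k θ u‖ ≤ 2 * M * (8 * M * ε / r) ^ k := by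
  induction k generalizing ρ u θ with
  | zero =>
    rw [pow_zero, mul_one]
    exact norm_stroboscopicDefect_id_le hf (by simpa using hu (mem_ball_self hr)) ε θ
  | succ k ih =>
    replace hf : PeriodicAnalyticField f M (thickening (r + ρ + k * r) S) :=
      hf.mono (thickening_mono (by push_cast; linarith) S)
    have hsub : thickening r (thickening ρ S) ⊆ thickening (r + ρ) S :=
      thickening_thickening_subset r ρ S
    have hstep := (periodicNearIdentity_PhiIter hr hε.le hεM k hf).norm_stroboscopicDefect_step_le
      (hf.mono (thickening_mono (le_add_of_nonneg_right (by positivity)) S)) isOpen_thickening hsub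
      hε hεM (fun θ w hw => ih hf ((ball_subset_thickening hw r).trans hsub) θ) hu θ
    calc ‖defect f ε (k + 1) θ u‖ ≤ 8 * M * ε / r * (2 * M * (8 * M * ε / r) ^ k) := hstep
      _ = 2 * M * (8 * M * ε / r) ^ (k + 1) := by ring

end Iteration

end NearIdentityFamilies

lemma thickening_Kset_subset {X E : Type*} [NormedAddCommGroup X] [NormedSpace ℝ X]
    [NormedAddCommGroup E] [NormedSpace ℂ E] (ι : X →ₗᵢ[ℝ] E) (K : Set X) (ρ δ : ℝ) :
    thickening δ (Kset ι K ρ) ⊆ Kset ι K (ρ + δ) := fun z hz => by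
  obtain ⟨_, ⟨u, hu, w, hw, rfl⟩, hdist⟩ := mem_thickening_iff.1 hz
  refine ⟨u, hu, z - ι u, ?_, by abel⟩
  calc ‖z - ι u‖ = ‖w + (z - (ι u + w))‖ := by congr 1; abel
    _ ≤ ρ + δ := (norm_add_le _ _).trans (add_le_add hw (dist_eq_norm z _ ▸ hdist.le))

lemma periodicAnalyticField_thickening_Kset {X E : Type*} [NormedAddCommGroup X] [NormedSpace ℝ X]
    [NormedAddCommGroup E] [NormedSpace ℂ E] {ι : X →ₗᵢ[ℝ] E} {K : Set X} {f : ℝ → E → E}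
    {M ρ δ : ℝ} (hanal : ∀ θ, AnalyticOn ℂ (f θ) (Kset ι K (ρ + δ)))
    (hbound : ∀ θ, ∀ u ∈ Kset ι K (ρ + δ), ‖f θ u‖ ≤ M)
    (hcont : ∀ u ∈ Kset ι K (ρ + δ), Continuous fun θ => f θ u)
    (hper : ∀ u ∈ Kset ι K (ρ + δ), Function.Periodic (fun θ => f θ u) 1) :
    PeriodicAnalyticField f M (thickening δ (Kset ι K ρ)) where
  analyticOnNhd θ := isOpen_thickening.analyticOn_iff_analyticOnNhd.1
    ((hanal θ).mono (thickening_Kset_subset ι K ρ δ))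
  norm_le θ u hu := hbound θ u (thickening_Kset_subset ι K ρ δ hu)
  continuous u hu := hcont u (thickening_Kset_subset ι K ρ δ hu)
  periodic u hu := hper u (thickening_Kset_subset ι K ρ δ hu)

theorem statement1_general {E : Type*} [NormedAddCommGroup E] [NormedSpace ℂ E] [CompleteSpace E]
    {S : Set E} {f : ℝ → E → E} {R M : ℝ} (hR : 0 < R) (hM : 0 < M)
    (hf : PeriodicAnalyticField f M (thickening R S))
    (ε₀ : ℝ) (hε₀ : ε₀ = R / (8 * M))
    (n : ℕ) (hn : 1 ≤ n) (ε : ℝ) (hε : 0 < ε) (hnε : (n + 1 : ℝ) * ε ≤ ε₀) :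
    (∀ u ∈ S, (fderiv ℂ (thAvg (PhiIter f ε n)) u).IsInvertible) ∧
    (∀ u ∈ S, ContDiff ℝ 1 (fun θ => PhiIter f ε n θ u)) ∧
    (∃ Ψ : ℝ → E → E, ∀ θ, AnalyticOn ℂ (Ψ θ) S ∧
        (∀ u ∈ S, PhiIter f ε n θ (Ψ θ u) = u) ∧ (∀ u ∈ S, Ψ θ (PhiIter f ε n θ u) = u)) ∧
    (∃ χ : E → E, AnalyticOn ℂ χ S ∧
        (∀ u ∈ S, thAvg (PhiIter f ε n) (χ u) = u) ∧
        (∀ u ∈ S, χ (thAvg (PhiIter f ε n) u) = u)) ∧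
    (∀ θ : ℝ, ∀ u ∈ S, ‖PhiIter f ε n θ u - u‖ ≤ R / (2 * (n + 1))) ∧
    (∀ u ∈ S, ‖aveField f (PhiIter f ε n) u‖ ≤ 2 * M) ∧
    (∀ θ : ℝ, ∀ u ∈ S, ‖defect f ε n θ u‖ ≤ 2 * M * (2 * (n + 1) * ε / ε₀) ^ n) := by
  set r : ℝ := R / (2 * (n + 1)) with hr_def
  have hr : 0 < r := by positivity
  have hεM : 4 * (ε * M) ≤ r := by
    rw [hε₀, le_div_iff₀ (by positivity)] at hnε
    rw [hr_def, le_div_iff₀ (by positivity)]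
    linarith
  have hratio : 8 * M * ε / r = 2 * (n + 1) * ε / ε₀ := by rw [hr_def, hε₀]; field_simp
  have hradius : 3 * r + n * r ≤ R := by
    rw [hr_def, ← add_mul, mul_div_assoc', div_le_iff₀ (by positivity)]
    nlinarith [show (1 : ℝ) ≤ n by exact_mod_cast hn]
  replace hf := hf.mono (thickening_mono hradius S)
  have hΦ := periodicNearIdentity_PhiIter hr hε.le hεM n hf
  have hball : ∀ u ∈ S, ball u r ⊆ thickening (3 * r) S := fun u hu =>
    (ball_subset_thickening hu r).trans (thickening_mono (by linarith) S)
  have hS : ∀ u ∈ S, u ∈ thickening (3 * r) S := fun u hu => hΦ.mem_of_ball_subset (hball u hu)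
  choose Ψ hΨ using fun θ =>
    exists_analyticOn_inverse_of_norm_sub_le hr (hΦ.analyticOnNhd θ) (hΦ.norm_sub_le θ)
  exact ⟨fun u hu => hΦ.isInvertible_fderiv_thAvg (hball u hu), fun u hu => hΦ.contDiff u (hS u hu),
    ⟨Ψ, hΨ⟩, exists_analyticOn_inverse_of_norm_sub_le hr hΦ.analyticOnNhd_thAvg
      fun u hu => hΦ.norm_thAvg_sub_le hu,
    fun θ u hu => (hΦ.norm_sub_le θ u (hS u hu)).trans (half_le_self hr.le),
    fun u hu => hΦ.norm_aveField_le
      (hf.mono (thickening_mono (le_add_of_nonneg_right (by positivity)) S)) (hball u hu),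
    fun θ u hu => hratio ▸ norm_defect_le hr hε hεM n hf (hball u hu) θ⟩

/-- Theorem (Castella–Chartier–Méhats–Murua): under Assumptions (K) and (A), with
`ε₀ = R/(8M)` and `(n+1)ε ≤ ε₀`, the maps `Φ^[n]` and `F^[n]` of the stroboscopic
averaging iteration are well-defined, `Φ^[n]` is `C¹` in `θ`, `Φ^[n]_θ` and `⟨Φ^[n]⟩` are
invertible with analytic inverse on `K_R`, and the estimates (i), (ii), (iii) hold. -/
theorem statement1
    {X Xc : Type*} [NormedAddCommGroup X] [NormedSpace ℝ X] [CompleteSpace X]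
    [NormedAddCommGroup Xc] [NormedSpace ℂ Xc] [CompleteSpace Xc]
    (ι : X →ₗᵢ[ℝ] Xc)
    (K U0 : Set X) (hKopen : IsOpen K) (hKbdd : Bornology.IsBounded (closure K))
    (hU0open : IsOpen U0) (hU0K : U0 ⊆ K)
    (fX : ℝ → X → X) (fC : ℝ → Xc → Xc)
    (hper : ∀ u, Function.Periodic (fun θ => fX θ u) 1)
    (hperC : ∀ u, Function.Periodic (fun θ => fC θ u) 1)
    -- Assumption (K)
    (hAssK : ∀ u₀ ∈ U0, ∀ ε ∈ Set.Ioc (0:ℝ) 1, ∃ u : ℝ → X, u 0 = u₀ ∧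
      ∀ t ∈ Set.Icc (0:ℝ) 1, HasDerivAt u (fX (t/ε) (u t)) t ∧ u t ∈ K)
    -- Assumption (A)
    (R M : ℝ) (hR : 0 < R) (hM : 0 < M)
    (hcontθ : ∀ u, Continuous fun θ => fC θ u)
    (hext : ∀ θ, ∀ x : X, ι x ∈ Kset ι K (2*R) → fC θ (ι x) = ι (fX θ x))
    (hanal : ∀ θ, AnalyticOn ℂ (fC θ) (Kset ι K (2*R)))
    (hbound : ∀ θ, ∀ u ∈ Kset ι K (2*R), ‖fC θ u‖ ≤ M)
    -- the regime of the theorem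
    (ε₀ : ℝ) (hε₀ : ε₀ = R / (8*M))
    (n : ℕ) (hn : 1 ≤ n) (ε : ℝ) (hε : 0 < ε) (hnε : (n+1 : ℝ) * ε ≤ ε₀) :
    -- well-definedness: the derivative of the average is invertible on K_R
    (∀ u ∈ Kset ι K R, ∃ e : Xc ≃L[ℂ] Xc,
        (e : Xc →L[ℂ] Xc) = fderiv ℂ (thAvg (PhiIter fC ε n)) u) ∧
    -- Φ^[n] is continuously differentiable with respect to θ
    (∀ u ∈ Kset ι K R, ContDiff ℝ 1 (fun θ => PhiIter fC ε n θ u)) ∧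
    -- Φ^[n]_θ is invertible with analytic inverse on K_R, for every θ
    (∃ Ψ : ℝ → Xc → Xc, ∀ θ, AnalyticOn ℂ (Ψ θ) (Kset ι K R) ∧
        (∀ u ∈ Kset ι K R, PhiIter fC ε n θ (Ψ θ u) = u) ∧
        (∀ u ∈ Kset ι K R, Ψ θ (PhiIter fC ε n θ u) = u)) ∧
    -- ⟨Φ^[n]⟩ is invertible with analytic inverse on K_R
    (∃ χ : Xc → Xc, AnalyticOn ℂ χ (Kset ι K R) ∧
        (∀ u ∈ Kset ι K R, thAvg (PhiIter fC ε n) (χ u) = u) ∧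
        (∀ u ∈ Kset ι K R, χ (thAvg (PhiIter fC ε n) u) = u)) ∧
    -- (i) ‖Φ^[n] − id‖_R ≤ R/(2(n+1))
    (∀ θ : ℝ, ∀ u ∈ Kset ι K R, ‖PhiIter fC ε n θ u - u‖ ≤ R / (2*(n+1))) ∧
    -- (ii) ‖F^[n]‖_R ≤ 2M
    (∀ u ∈ Kset ι K R, ‖aveField fC (PhiIter fC ε n) u‖ ≤ 2*M) ∧
    -- (iii) ‖δ^[n]‖_R ≤ 2M (2(n+1)ε/ε₀)^n
    (∀ θ : ℝ, ∀ u ∈ Kset ι K R,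
        ‖defect fC ε n θ u‖ ≤ 2*M * (2*(n+1)*ε/ε₀)^n) := by
  rw [two_mul] at hanal hbound
  exact statement1_general hR hM (periodicAnalyticField_thickening_Kset hanal hbound
    (fun u _ => hcontθ u) fun u _ => hperC u) ε₀ hε₀ n hn ε hε hnε
end
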